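/- Let Ω ⊂ ℝ² be a compact convex set of positive measure, let l ⊂ ℝ² be a straight line through the origin, let v_l be a unit vector orthogonal to l, and let H = {a_k}_{k∈ℤ} ⊂ ℝ be a uniformly discrete set. Then the union of parallel lines P = ⋃_{k∈ℤ} (l + a_k v_l) is a sampling set for B_Ω if and only if D⁻(H)·v_l ∉ Ω − Ω. -/

import Mathlib

open MeasureTheory FourierTransform Filter Metric
open scoped Pointwise RealInnerProductSpace ENNReal NNReal

noncomputable section

variable {V : Type*} [NormedAddCommGroup V] [InnerProductSpace ℝ V]
  [FiniteDimensional ℝ V] [MeasurableSpace V] [BorelSpace V]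

/-- `f` belongs to the Bernstein space `B_Ω`: it is a continuous bounded function which is the
inverse Fourier transform of a tempered distribution supported in `Ω`, i.e. its distributional
Fourier transform annihilates every test function whose support is disjoint from `Ω`. -/
def MemBernstein (Ω : Set V) (f : V → ℂ) : Prop :=
  Continuous f ∧ (∃ C, ∀ x, ‖f x‖ ≤ C) ∧
    ∀ ψ : V → ℂ, ContDiff ℝ (⊤ : ℕ∞) ψ → HasCompactSupport ψ → tsupport ψ ∩ Ω = ∅ →
      ∫ x, f x * 𝓕 ψ x = 0

/-- `P` is a sampling set for the Bernstein space `B_Ω`: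
`‖f‖_∞ ≤ C · sup_{x ∈ P} ‖f x‖` for all `f ∈ B_Ω`. -/
def IsSamplingSet (Ω P : Set V) : Prop :=
  ∃ C > 0, ∀ f : V → ℂ, MemBernstein Ω f →
    ∀ x : V, ‖f x‖ ≤ C * sSup ((fun p => ‖f p‖) '' P)

/-- A set is uniformly discrete if distinct points are separated by a fixed positive distance. -/
def UniformlyDiscrete {X : Type*} [PseudoMetricSpace X] (Λ : Set X) : Prop :=
  ∃ δ > 0, ∀ x ∈ Λ, ∀ y ∈ Λ, x ≠ y → δ ≤ dist x y

/-- The lower uniform (Beurling) density of a set: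
`D⁻(Λ) = lim_{r→∞} inf_x #(Λ ∩ B_r(x)) / |B_r(x)|`. -/
def lowerUniformDensity {X : Type*} [NormedAddCommGroup X] [MeasureSpace X] (Λ : Set X) : ℝ :=
  liminf (fun r : ℝ => ⨅ x : X,
    (Nat.card ↥(Λ ∩ closedBall x r) : ℝ) / (volume (closedBall x r)).toReal) atTop

lemma sum_log_add_log_norm_le_circleAverage {E : ℂ → ℂ} (hE : Differentiable ℂ E) (h0 : E 0 ≠ 0)
    {R : ℝ} (hR : 0 < R) (Λ : Finset ℝ) (hΛ : ∀ t ∈ Λ, |t| ≤ R ∧ E t = 0) :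
    ∑ t ∈ Λ, Real.log (R * |t|⁻¹) + Real.log ‖E 0‖ ≤
      Real.circleAverage (fun z => Real.log ‖E z‖) 0 R := by
  have hAn : AnalyticOnNhd ℂ E (closedBall 0 |R|) := fun z _ => hE.analyticAt z
  rw [hAn.circleAverage_log_norm hR.ne' h0]
  gcongr
  set D := MeromorphicOn.divisor E (closedBall 0 |R|) with hD
  have hfin := D.finiteSupport (isCompact_closedBall 0 |R|)
  have hord : ∀ z, analyticOrderAt E z ≠ ⊤ := by
    intro z hz
    have h1 : E =ᶠ[nhds z] 0 := analyticOrderAt_eq_top.mp hz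
    have h2 : AnalyticOnNhd ℂ E Set.univ := fun w _ => hE.analyticAt w
    have := h2.eqOn_zero_of_preconnected_of_eventuallyEq_zero isPreconnected_univ
      (Set.mem_univ z) h1
    exact h0 (this (Set.mem_univ 0))
  have hDnn : ∀ z, 0 ≤ D z := (MeromorphicOn.AnalyticOnNhd.divisor_nonneg hAn)
  have hsub : (Function.support fun u : ℂ => (D u : ℝ) * Real.log (R * ‖0 - u‖⁻¹)) ⊆
      (hfin.toFinset : Set ℂ) := by
    intro u hu
    simp only [Set.Finite.coe_toFinset, Function.mem_support]
    intro h
    simp [h] at hu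
  rw [finsum_eq_sum_of_support_subset _ hsub]
  have hone : ∀ t ∈ Λ, 1 ≤ D (t : ℂ) := by
    intro t ht
    have hmem : (t : ℂ) ∈ closedBall (0 : ℂ) |R| := by
      simpa [abs_of_pos hR] using (hΛ t ht).1
    rw [hD, MeromorphicOn.AnalyticOnNhd.divisor_apply hAn hmem]
    have h1 : analyticOrderAt E (t : ℂ) ≠ 0 :=
      (hE.analyticAt _).analyticOrderAt_ne_zero.mpr (hΛ t ht).2
    obtain ⟨n, hn⟩ := ENat.ne_top_iff_exists.mp (hord t)
    rw [← hn] at h1 ⊢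
    have h3 : n ≠ 0 := by exact_mod_cast h1
    simpa using Nat.one_le_iff_ne_zero.mpr h3
  calc ∑ t ∈ Λ, Real.log (R * |t|⁻¹)
      = ∑ z ∈ Λ.map ⟨fun t : ℝ => (t : ℂ), Complex.ofReal_injective⟩, Real.log (R * ‖0 - z‖⁻¹) := by
        rw [Finset.sum_map]; simp
    _ ≤ ∑ z ∈ Λ.map ⟨fun t : ℝ => (t : ℂ), Complex.ofReal_injective⟩,
          (D z : ℝ) * Real.log (R * ‖0 - z‖⁻¹) := by
        apply Finset.sum_le_sum
        intro z hz
        obtain ⟨t, ht, rfl⟩ := Finset.mem_map.mp hz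
        simp only [Function.Embedding.coeFn_mk, zero_sub, norm_neg, Complex.norm_real,
          Real.norm_eq_abs]
        have h1 : (1 : ℝ) ≤ D (t : ℂ) := by exact_mod_cast hone t ht
        have ht0 : t ≠ 0 := by
          rintro rfl; exact h0 (by simpa using (hΛ 0 ht).2)
        have h2 : 0 ≤ Real.log (R * |t|⁻¹) := by
          apply Real.log_nonneg
          rw [← div_eq_mul_inv, one_le_div (abs_pos.mpr ht0)]
          exact (hΛ t ht).1
        nlinarith
    _ ≤ ∑ z ∈ hfin.toFinset, (D z : ℝ) * Real.log (R * ‖0 - z‖⁻¹) := by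
        apply Finset.sum_le_sum_of_subset_of_nonneg
        · intro z hz
          obtain ⟨t, ht, rfl⟩ := Finset.mem_map.mp hz
          simp only [Set.Finite.mem_toFinset, Function.mem_support]
          have := hone t ht
          intro h
          simp only [Function.Embedding.coeFn_mk] at h
          omega
        · intro z hz _
          have hz' : z ∈ closedBall (0 : ℂ) |R| := D.supportWithinDomain (by simpa using hz)
          have h1 : (0 : ℝ) ≤ D z := by exact_mod_cast hDnn z
          rcases eq_or_ne z 0 with rfl | hz0
          · simp
          apply mul_nonneg h1
          apply Real.log_nonneg
          rw [← div_eq_mul_inv, one_le_div (by simpa using hz0)]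
          simpa [abs_of_pos hR] using hz'

lemma circleAverage_log_norm_le_of_norm_le_exp {E : ℂ → ℂ} (hE : Differentiable ℂ E) {M A R : ℝ}
    (hM : 1 ≤ M) (hA : 0 ≤ A) (hR : 0 < R)
    (hb : ∀ z : ℂ, ‖z‖ = R → ‖E z‖ ≤ M * Real.exp (A * |z.im|)) :
    Real.circleAverage (fun z => Real.log ‖E z‖) 0 R ≤ Real.log M + A * (2 * R / Real.pi) := by
  have hint : CircleIntegrable (fun z => Real.log ‖E z‖) 0 R :=
    MeromorphicOn.circleIntegrable_log_norm (fun z _ => (hE.analyticAt z).meromorphicAt)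
  have hint2 : CircleIntegrable (fun z : ℂ => Real.log M + A * |z.im|) 0 R :=
    ContinuousOn.circleIntegrable hR.le (by fun_prop)
  refine (Real.circleAverage_mono hint hint2 ?_).trans ?_
  · intro z hz
    have hz' : ‖z‖ = R := by simpa [abs_of_pos hR] using hz
    rcases eq_or_ne (‖E z‖) 0 with h | h
    · simp only [h, Real.log_zero]
      have := Real.log_nonneg hM
      positivity
    · have := Real.log_le_log (lt_of_le_of_ne (norm_nonneg _) (Ne.symm h)) (hb z hz')
      rwa [Real.log_mul (by positivity) (Real.exp_ne_zero _), Real.log_exp] at this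
  · rw [Real.circleAverage]
    have hsin : ∫ θ in (0:ℝ)..(2 * Real.pi), |Real.sin θ| = 4 := by
      have hc : Continuous fun θ => |Real.sin θ| := by fun_prop
      rw [← intervalIntegral.integral_add_adjacent_intervals (b := Real.pi)
        (hc.intervalIntegrable _ _) (hc.intervalIntegrable _ _)]
      have h1 : ∫ θ in (0:ℝ)..Real.pi, |Real.sin θ| = 2 := by
        rw [intervalIntegral.integral_congr (g := Real.sin)]
        · rw [integral_sin]; norm_num
        · intro θ hθ
          rw [Set.uIcc_of_le Real.pi_pos.le] at hθ
          exact abs_of_nonneg (Real.sin_nonneg_of_nonneg_of_le_pi hθ.1 hθ.2)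
      have h2 : ∫ θ in Real.pi..(2 * Real.pi), |Real.sin θ| = 2 := by
        have := intervalIntegral.integral_comp_add_right (a := 0) (b := Real.pi)
          (fun θ => |Real.sin θ|) Real.pi
        rw [zero_add, ← two_mul] at this
        rw [← this, ← h1]
        simp
      rw [h1, h2]; norm_num
    have him : ∀ θ, |(circleMap 0 R θ).im| = R * |Real.sin θ| := by
      intro θ
      rw [circleMap_zero_im, abs_mul, abs_of_pos hR]
    simp only [him]
    rw [intervalIntegral.integral_add (by simp)
      (Continuous.intervalIntegrable (by fun_prop) _ _)]
    simp only [intervalIntegral.integral_const_mul, hsin, intervalIntegral.integral_const,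
      smul_eq_mul, sub_zero]
    apply le_of_eq
    field_simp
    ring

lemma le_sum_log_of_card_le {c R t₀ : ℝ} (ht₀ : 0 < t₀) (hR : t₀ ≤ R) (Λ : Finset ℝ)
    (hΛ0 : ∀ t ∈ Λ, t ≠ 0) (hΛR : ∀ t ∈ Λ, |t| ≤ R)
    (hcard : ∀ t, t₀ ≤ t → t ≤ R → c * t ≤ ((Λ.filter fun x => |x| ≤ t).card : ℝ)) :
    c * (R - t₀) ≤ ∑ t ∈ Λ, Real.log (R * |t|⁻¹) := by
  have hR0 : 0 < R := ht₀.trans_le hR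
  have hinv : ContinuousOn (fun t : ℝ => t⁻¹) (Set.Icc t₀ R) :=
    continuousOn_inv₀.mono fun t ht => (ht₀.trans_le ht.1).ne'
  have hinvi : IntegrableOn (fun t : ℝ => t⁻¹) (Set.Icc t₀ R) := hinv.integrableOn_Icc
  have key : ∀ x ∈ Λ,
      ∫ t in Set.Icc t₀ R, (Set.Ici |x|).indicator (fun t => t⁻¹) t ≤ Real.log (R * |x|⁻¹) := by
    intro x hx
    have hx0 : 0 < |x| := abs_pos.mpr (hΛ0 x hx)
    rw [setIntegral_indicator measurableSet_Ici]
    set s := max t₀ |x|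
    have hs0 : 0 < s := lt_max_of_lt_left ht₀
    have hsR : s ≤ R := max_le hR (hΛR x hx)
    have hset : Set.Icc t₀ R ∩ Set.Ici |x| = Set.Icc s R := by
      ext t; simp only [Set.mem_inter_iff, Set.mem_Icc, Set.mem_Ici, s, sup_le_iff]; tauto
    rw [hset, integral_Icc_eq_integral_Ioc, ← intervalIntegral.integral_of_le hsR,
      integral_inv_of_pos hs0 hR0, div_eq_mul_inv]
    gcongr
    exact le_max_right _ _
  have hci : IntegrableOn (fun _ : ℝ => c) (Set.Icc t₀ R) := by
    simp
  calc c * (R - t₀) = ∫ t in Set.Icc t₀ R, c := by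
        simp [hR, mul_comm]
    _ ≤ ∫ t in Set.Icc t₀ R, ∑ x ∈ Λ, (Set.Ici |x|).indicator (fun t => t⁻¹) t := by
        refine setIntegral_mono_on hci ?_ measurableSet_Icc ?_
        · exact integrable_finsetSum _ fun x _ => hinvi.indicator measurableSet_Ici
        · intro t ht
          have ht0 : 0 < t := ht₀.trans_le ht.1
          have := hcard t ht.1 ht.2
          have hsum : ∑ x ∈ Λ, (Set.Ici |x|).indicator (fun t => t⁻¹) t =
              ((Λ.filter fun x => |x| ≤ t).card : ℝ) * t⁻¹ := by
            rw [Finset.card_eq_sum_ones, Nat.cast_sum, Finset.sum_mul, Finset.sum_filter]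
            refine Finset.sum_congr rfl fun x _ => ?_
            simp [Set.indicator_apply]
          rw [hsum, ← div_eq_mul_inv, le_div_iff₀ ht0]
          exact this
    _ = ∑ x ∈ Λ, ∫ t in Set.Icc t₀ R, (Set.Ici |x|).indicator (fun t => t⁻¹) t :=
        integral_finsetSum _ fun x _ => hinvi.indicator measurableSet_Ici
    _ ≤ _ := Finset.sum_le_sum key

lemma finite_and_ncard_le_of_separated {δ a b : ℝ} (hδ : 0 < δ) {S : Set ℝ}
    (hS : ∀ x ∈ S, ∀ y ∈ S, x ≠ y → δ ≤ dist x y) (hab : S ⊆ Set.Icc a b) :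
    S.Finite ∧ S.ncard ≤ ⌊(b - a) / δ⌋₊ + 1 := by
  have hinj : Set.InjOn (fun x => ⌊(x - a) / δ⌋₊) S := by
    intro x hx y hy hxy
    by_contra hne
    have h1 := hS x hx y hy hne
    have hx0 : 0 ≤ (x - a) / δ := div_nonneg (by linarith [(hab hx).1]) hδ.le
    have hy0 : 0 ≤ (y - a) / δ := div_nonneg (by linarith [(hab hy).1]) hδ.le
    simp only at hxy
    have e1 := Nat.floor_le hx0
    have e2 := Nat.lt_floor_add_one ((x - a) / δ)
    have e3 := Nat.floor_le hy0
    have e4 := Nat.lt_floor_add_one ((y - a) / δ)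
    rw [hxy] at e1 e2
    have h2 : |(x - a) / δ - (y - a) / δ| < 1 := by rw [abs_lt]; constructor <;> linarith
    rw [← sub_div, abs_div, abs_of_pos hδ, div_lt_one hδ] at h2
    rw [Real.dist_eq] at h1
    have : x - a - (y - a) = x - y := by ring
    rw [this] at h2
    linarith
  have hmaps : Set.MapsTo (fun x => ⌊(x - a) / δ⌋₊) S
      (Finset.range (⌊(b - a) / δ⌋₊ + 1) : Set ℕ) := by
    intro x hx
    simp only [Finset.coe_range, Set.mem_Iio, Nat.lt_succ_iff]
    apply Nat.floor_mono
    gcongr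
    exact (hab hx).2
  refine ⟨Set.Finite.of_injOn hmaps hinj (Finset.finite_toSet _), ?_⟩
  have := Set.ncard_le_ncard_of_injOn _ hmaps hinj (Finset.finite_toSet _)
  simpa [Set.ncard_coe_finset] using this

lemma exists_lower_bound_on_separated_set {L D t₀ δ M c : ℝ} (hL : 0 ≤ L) (hLD : L < D)
    (ht₀ : 0 < t₀) (hδ : 0 < δ) (hM : 0 ≤ M) (hc : 0 < c) :
    ∃ ε > 0, ∀ H : Set ℝ, (∀ x ∈ H, ∀ y ∈ H, x ≠ y → δ ≤ dist x y) →
      (∀ t, t₀ ≤ t → 2 * D * t ≤ Nat.card ↥(H ∩ closedBall 0 t)) →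
      ∀ E : ℂ → ℂ, Differentiable ℂ E →
        (∀ z : ℂ, ‖E z‖ ≤ M * Real.exp (Real.pi * L * |z.im|)) → c ≤ ‖E 0‖ →
        ∃ t ∈ H, ε ≤ ‖E t‖ := by
  obtain ⟨R, hRt, hR⟩ : ∃ R, t₀ ≤ R ∧
      Real.log (M + 1) + 2 * L * R < Real.log (c / 2) + 2 * D * (R - t₀) := by
    refine ⟨max t₀ ((Real.log (M + 1) - Real.log (c / 2) + 2 * D * t₀ + 1) / (2 * (D - L))),
      le_max_left _ _, ?_⟩
    have h1 := le_max_right t₀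
      ((Real.log (M + 1) - Real.log (c / 2) + 2 * D * t₀ + 1) / (2 * (D - L)))
    rw [div_le_iff₀ (by linarith)] at h1
    linarith
  have hR0 : 0 < R := ht₀.trans_le hRt
  set N := ⌊(R - -R) / δ⌋₊ + 1 with hN
  set B := (N : ℝ) * (max 1 (2 * R / δ)) ^ N with hB
  have hB0 : 0 < B := by positivity
  refine ⟨min (c / 2) 1 / B, by positivity, ?_⟩
  intro H hH hcard E hE hbd hE0
  by_contra! hcon
  have hfin := finite_and_ncard_le_of_separated hδ (S := H ∩ closedBall 0 R) (a := -R) (b := R)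
    (fun x hx y hy => hH x hx.1 y hy.1)
    (fun x hx => by simpa [abs_le] using hx.2)
  set Λ := hfin.1.toFinset with hΛ
  have hΛN : Λ.card ≤ N := by
    rw [← Set.ncard_eq_toFinset_card _ hfin.1]; exact hfin.2
  have hmemΛ : ∀ x, x ∈ Λ ↔ x ∈ H ∧ |x| ≤ R := by
    intro x; simp [hΛ]
  let p : ℂ → ℂ := fun z =>
    ∑ x ∈ Λ, E x * ∏ y ∈ Λ.erase x, ((z - y) / ((x : ℂ) - y))
  have hpd : Differentiable ℂ p := by
    intro z
    simp only [p]
    fun_prop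
  have hpb : ∀ z : ℂ, ‖z‖ ≤ R → ‖p z‖ ≤ min (c / 2) 1 := by
    intro z hz
    calc ‖p z‖ ≤ ∑ x ∈ Λ, min (c / 2) 1 / B * (max 1 (2 * R / δ)) ^ N := by
          refine norm_sum_le_of_le _ fun x hx => ?_
          rw [norm_mul, norm_prod]
          have hx' := (hmemΛ x).mp hx
          refine mul_le_mul (hcon x hx'.1).le ?_ (by positivity) (by positivity)
          calc ∏ y ∈ Λ.erase x, ‖(z - y) / ((x : ℂ) - y)‖
              ≤ ∏ y ∈ Λ.erase x, max 1 (2 * R / δ) := by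
                refine Finset.prod_le_prod (fun _ _ => norm_nonneg _) fun y hy => ?_
                have hy1 := Finset.mem_erase.mp hy
                have hy' := (hmemΛ y).mp hy1.2
                refine le_max_of_le_right ?_
                rw [norm_div]
                have h1 := hH x hx'.1 y hy'.1 (Ne.symm hy1.1)
                have h2 : ‖(x : ℂ) - y‖ = dist x y := by
                  rw [← Complex.ofReal_sub, Complex.norm_real, Real.dist_eq, Real.norm_eq_abs]
                rw [h2]
                gcongr
                calc ‖z - y‖ ≤ ‖z‖ + ‖(y : ℂ)‖ := norm_sub_le _ _
                  _ ≤ 2 * R := by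
                    rw [Complex.norm_real, Real.norm_eq_abs]; linarith [hy'.2]
            _ = max 1 (2 * R / δ) ^ (Λ.erase x).card := by simp
            _ ≤ _ := pow_le_pow_right₀ (le_max_left _ _)
                ((Finset.card_erase_le).trans hΛN)
      _ = Λ.card * (min (c / 2) 1 / B * (max 1 (2 * R / δ)) ^ N) := by simp
      _ ≤ N * (min (c / 2) 1 / B * (max 1 (2 * R / δ)) ^ N) := by gcongr
      _ = min (c / 2) 1 / B * B := by rw [hB]; ring
      _ = _ := div_mul_cancel₀ _ hB0.ne'
  have hpe : ∀ x ∈ Λ, p x = E x := by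
    intro x hx
    simp only [p]
    rw [Finset.sum_eq_single x]
    · rw [Finset.prod_eq_one, mul_one]
      intro y hy
      apply div_self
      rw [sub_ne_zero]
      exact_mod_cast (Finset.ne_of_mem_erase hy).symm
    · intro y hy hyx
      rw [Finset.prod_eq_zero (Finset.mem_erase.mpr ⟨hyx.symm, hx⟩) (by simp), mul_zero]
    · exact fun h => absurd hx h
  have hF : Differentiable ℂ fun z => E z - p z := hE.sub hpd
  have hF0 : c / 2 ≤ ‖E 0 - p 0‖ := by
    have h1 := norm_sub_norm_le (E 0) (p 0)
    have h2 := (hpb 0 (by simpa using hR0.le)).trans (min_le_left _ _)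
    linarith
  have hF0' : E 0 - p 0 ≠ 0 := by
    rw [← norm_pos_iff]; linarith
  have hz : ∀ t ∈ Λ, |t| ≤ R ∧ E t - p t = 0 := fun t ht =>
    ⟨((hmemΛ t).mp ht).2, by rw [hpe t ht, sub_self]⟩
  have hne : ∀ t ∈ Λ, t ≠ 0 := by
    rintro t ht rfl
    exact hF0' (by simpa using (hz 0 ht).2)
  have h1 := sum_log_add_log_norm_le_circleAverage hF hF0' hR0 Λ hz
  have h2 := circleAverage_log_norm_le_of_norm_le_exp hF (M := M + 1) (A := Real.pi * L)
    (by linarith) (by positivity) hR0 (by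
      intro z hz
      have e1 := hbd z
      have e2 := (hpb z hz.le).trans (min_le_right _ _)
      have e3 : 1 ≤ Real.exp (Real.pi * L * |z.im|) := Real.one_le_exp (by positivity)
      calc ‖E z - p z‖ ≤ ‖E z‖ + ‖p z‖ := norm_sub_le _ _
        _ ≤ _ := by linarith)
  have h3 := le_sum_log_of_card_le (c := 2 * D) ht₀ hRt Λ hne (fun t ht => (hz t ht).1) (by
    intro t ht htR
    have := hcard t ht
    have e : (H ∩ closedBall 0 t) = ((Λ.filter fun x => |x| ≤ t : Finset ℝ) : Set ℝ) := by
      ext x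
      simp only [Set.mem_inter_iff, mem_closedBall, dist_zero_right, Real.norm_eq_abs,
        Finset.coe_filter, Set.mem_ofPred_eq, hmemΛ]
      constructor
      · rintro ⟨h, h'⟩; exact ⟨⟨h, h'.trans htR⟩, h'⟩
      · rintro ⟨⟨h, _⟩, h'⟩; exact ⟨h, h'⟩
    rw [e, Nat.card_coe_set_eq, Set.ncard_coe_finset] at this
    exact this)
  have h4 : Real.log (c / 2) ≤ Real.log ‖E 0 - p 0‖ := Real.log_le_log (by positivity) hF0
  have h5 : Real.pi * L * (2 * R / Real.pi) = 2 * L * R := by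
    field_simp
  linarith

lemma MemBernstein.const_mul {Ω : Set V} {f : V → ℂ} (hf : MemBernstein Ω f) (c : ℂ) :
    MemBernstein Ω fun x => c * f x := by
  obtain ⟨h1, ⟨C, hC⟩, h3⟩ := hf
  refine ⟨by fun_prop, ⟨‖c‖ * C, fun x => ?_⟩, fun ψ a b d => ?_⟩
  · rw [norm_mul]; gcongr; exact hC x
  · simp_rw [mul_assoc]
    rw [integral_const_mul, h3 ψ a b d, mul_zero]

lemma MemBernstein.comp_add_right {Ω : Set V} {f : V → ℂ} (hf : MemBernstein Ω f) (p : V) :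
    MemBernstein Ω fun x => f (x + p) := by
  obtain ⟨h1, ⟨C, hC⟩, h3⟩ := hf
  refine ⟨by fun_prop, ⟨C, fun x => hC _⟩, fun ψ a b d => ?_⟩
  let θ : V → ℂ := fun y => Complex.exp (2 * Real.pi * ⟪y, p⟫ * Complex.I) * ψ y
  have hθ1 : ContDiff ℝ (⊤ : ℕ∞) θ := by
    refine ContDiff.mul (ContDiff.cexp ?_) a
    refine ContDiff.mul (contDiff_const.mul ?_) contDiff_const
    exact Complex.ofRealCLM.contDiff.comp (contDiff_id.inner ℝ contDiff_const)
  have hθ2 : tsupport θ ⊆ tsupport ψ := closure_mono (Function.support_mul_subset_right _ _)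
  have hθ3 : HasCompactSupport θ := b.mul_left
  have key := h3 θ hθ1 hθ3 (Set.subset_empty_iff.mp
    ((Set.inter_subset_inter_left _ hθ2).trans d.subset))
  rw [← key, ← integral_add_right_eq_self (fun x => f x * 𝓕 θ x) p]
  congr 1
  ext x
  congr 1
  rw [Real.fourier_eq', Real.fourier_eq']
  congr 1
  ext y
  simp only [θ, smul_eq_mul]
  rw [← mul_assoc, ← Complex.exp_add, inner_add_right]
  congr 2
  push_cast
  ring

/-- A Schwartz function normalised at the origin whose inverse Fourier representation lives in a
small ball. -/
lemma exists_schwartz_kernel (V : Type*) [NormedAddCommGroup V] [InnerProductSpace ℝ V]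
    [FiniteDimensional ℝ V] [MeasurableSpace V] [BorelSpace V] {ε : ℝ} (hε : 0 < ε) :
    ∃ (η : V → ℂ) (k : SchwartzMap V ℂ), Continuous η ∧
      (Function.support η ⊆ closedBall 0 ε) ∧ (𝓕 η = k) ∧ k 0 = 1 ∧ ∀ x, ‖k x‖ ≤ 1 := by
  let b : ContDiffBump (0 : V) := ⟨ε / 2, ε, by positivity, by linarith⟩
  let η : V → ℂ := fun x => (b.normed volume x : ℂ)
  have hs : ContDiff ℝ (⊤ : ℕ∞) η := Complex.ofRealCLM.contDiff.comp b.contDiff_normed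
  have hc : HasCompactSupport η := (b.hasCompactSupport_normed (μ := volume)).comp_left
    (g := fun x : ℝ => (x : ℂ)) (by simp)
  have hnorm : ∫ x, ‖η x‖ = 1 := by
    simp only [η, Complex.norm_real, Real.norm_eq_abs, abs_of_nonneg (b.nonneg_normed _)]
    exact b.integral_normed
  refine ⟨η, 𝓕 (hc.toSchwartzMap hs), hs.continuous, ?_, ?_, ?_, ?_⟩
  · intro x hx
    have : b.normed volume x ≠ 0 := by simpa [η] using hx
    have h2 : x ∈ Function.support (b.normed volume) := this
    rw [b.support_normed_eq] at h2
    exact ball_subset_closedBall h2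
  · rw [SchwartzMap.fourier_coe]; rfl
  · rw [SchwartzMap.fourier_coe]
    change 𝓕 η 0 = 1
    rw [Real.fourier_eq]
    simp only [inner_zero_right, neg_zero, AddChar.map_zero_eq_one, one_smul, η]
    rw [integral_complex_ofReal, b.integral_normed]
    simp
  · intro x
    rw [SchwartzMap.fourier_coe, ← hnorm]
    exact VectorFourier.norm_fourierIntegral_le_integral_norm _ _ _ _ _

lemma SchwartzMap.exists_norm_le_div_one_add_pow {E : Type*} [NormedAddCommGroup E]
    [NormedSpace ℝ E] (k : SchwartzMap E ℂ) (n : ℕ) :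
    ∃ C > 0, ∀ x, ‖k x‖ ≤ C / (1 + ‖x‖) ^ n := by
  refine ⟨_, lt_of_le_of_lt ?_ (lt_add_one (2 ^ n * (Finset.Iic (n, 0)).sup
      (fun m => SchwartzMap.seminorm ℝ m.1 m.2) k)), fun x => ?_⟩
  · positivity
  · rw [le_div_iff₀ (by positivity), mul_comm]
    have := SchwartzMap.one_add_le_sup_seminorm_apply (𝕜 := ℝ) (m := (n, 0)) le_rfl le_rfl k x
    rw [norm_iteratedFDeriv_zero] at this
    linarith

open ContinuousLinearMap in
lemma MemBernstein.mul_kernel {Ω : Set V} {f : V → ℂ} (hf : MemBernstein Ω f) {ε : ℝ}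
    {η : V → ℂ} {k : SchwartzMap V ℂ} (hη : Continuous η)
    (hs : Function.support η ⊆ closedBall 0 ε) (hk : 𝓕 η = k) (hk1 : ∀ x, ‖k x‖ ≤ 1) :
    MemBernstein (Ω + closedBall 0 ε) fun x => f x * k x := by
  obtain ⟨h1, ⟨C, hC⟩, h3⟩ := hf
  refine ⟨by fun_prop, ⟨C, fun x => ?_⟩, fun ψ a b d => ?_⟩
  · rw [norm_mul]
    exact (mul_le_of_le_one_right (norm_nonneg _) (hk1 x)).trans (hC x)
  have hηc : HasCompactSupport η :=
    HasCompactSupport.of_support_subset_isCompact (isCompact_closedBall 0 ε) hs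
  have hηi : Integrable η := hη.integrable_of_hasCompactSupport hηc
  have hψi : Integrable ψ := a.continuous.integrable_of_hasCompactSupport b
  let θ : V → ℂ := convolution η ψ (mul ℝ ℂ) volume
  have hθ1 : ContDiff ℝ (⊤ : ℕ∞) θ := b.contDiff_convolution_right _ hηi.locallyIntegrable a
  have hθ2 : HasCompactSupport θ := hηc.convolution _ b
  have hθ3 : tsupport θ ⊆ closedBall 0 ε + tsupport ψ := by
    refine closure_minimal ?_ ((isCompact_closedBall (0 : V) ε).add b.isCompact).isClosed
    exact (MeasureTheory.support_convolution_subset _).trans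
      (Set.add_subset_add hs subset_closure)
  have hθ4 : tsupport θ ∩ Ω = ∅ := by
    rw [Set.eq_empty_iff_forall_notMem]
    rintro x ⟨hx, hxΩ⟩
    obtain ⟨y, hy, z, hz, rfl⟩ := hθ3 hx
    have : z ∈ tsupport ψ ∩ (Ω + closedBall 0 ε) :=
      ⟨hz, y + z, hxΩ, -y, by simpa using hy, by simp⟩
    rw [d] at this
    exact this
  rw [← h3 θ hθ1 hθ2 hθ4]
  congr 1
  ext x
  have : 𝓕 θ x = 𝓕 η x * 𝓕 ψ x := Real.fourier_mul_convolution_eq hηi hψi x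
  rw [this, hk]
  ring

lemma MemBernstein.fourier_eq_zero {Ω : Set V} (hΩ : IsClosed Ω) {f : V → ℂ}
    (hf : MemBernstein Ω f) (hi : Integrable f) {ξ : V} (hξ : ξ ∉ Ω) : 𝓕 f ξ = 0 := by
  have hcont : Continuous (𝓕 f) :=
    VectorFourier.fourierIntegral_continuous Real.continuous_fourierChar continuous_inner hi
  have hae : ∀ᵐ x, x ∈ Ωᶜ → 𝓕 f x = 0 := by
    refine hΩ.isOpen_compl.ae_eq_zero_of_integral_contDiff_smul_eq_zero
      (hcont.locallyIntegrable.locallyIntegrableOn _) ?_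
    intro g hg hgc hgs
    let ψ : V → ℂ := fun x => (g x : ℂ)
    have hψ1 : ContDiff ℝ (⊤ : ℕ∞) ψ := Complex.ofRealCLM.contDiff.comp hg
    have hψ2 : HasCompactSupport ψ := hgc.comp_left (g := fun x : ℝ => (x : ℂ)) (by simp)
    have hψ3 : tsupport ψ ⊆ tsupport g :=
      closure_mono (Function.support_comp_subset (g := fun x : ℝ => (x : ℂ)) (by simp) g)
    have h0 := hf.2.2 ψ hψ1 hψ2 (by
      rw [Set.eq_empty_iff_forall_notMem]
      exact fun x hx => hgs (hψ3 hx.1) hx.2)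
    have hψi : Integrable ψ := hψ1.continuous.integrable_of_hasCompactSupport hψ2
    have := VectorFourier.integral_fourierIntegral_smul_eq_flip (L := innerₗ V) (μ := volume)
      (ν := volume) (f := f) (g := ψ) Real.continuous_fourierChar continuous_inner hi hψi
    rw [flip_innerₗ] at this
    calc ∫ x, g x • 𝓕 f x = ∫ x, 𝓕 f x • ψ x := by
          congr 1; ext x; simp [ψ, mul_comm]
      _ = ∫ x, f x • 𝓕 ψ x := this
      _ = 0 := h0
  have h2 : (𝓕 f) =ᵐ[volume.restrict Ωᶜ] (fun _ => (0 : ℂ)) := by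
    rw [Filter.EventuallyEq, ae_restrict_iff' hΩ.isOpen_compl.measurableSet]
    exact hae
  exact Measure.eqOn_open_of_ae_eq h2 hΩ.isOpen_compl hcont.continuousOn
    continuousOn_const hξ

lemma exists_entire_extension_fourierInv {m : ℝ → ℂ} {A K : ℝ} (hA : 0 ≤ A) (hm : Continuous m)
    (hs : ∀ τ, A < |τ| → m τ = 0) (hK : ∀ τ, ‖m τ‖ ≤ K) :
    ∃ E : ℂ → ℂ, Differentiable ℂ E ∧
      (∀ z, ‖E z‖ ≤ K * (2 * A) * Real.exp (2 * Real.pi * A * |z.im|)) ∧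
      ∀ t : ℝ, E t = 𝓕⁻ m t := by
  have hK0 : 0 ≤ K := (norm_nonneg _).trans (hK 0)
  have hfinite : volume (Set.Icc (-A) A) < ⊤ := by simp
  have hexp : ∀ (z : ℂ) (τ : ℝ), τ ∈ Set.Icc (-A) A →
      ‖Complex.exp (2 * Real.pi * Complex.I * z * τ)‖ ≤ Real.exp (2 * Real.pi * A * |z.im|) := by
    intro z τ hτ
    rw [Complex.norm_exp]
    apply Real.exp_le_exp.mpr
    have : (2 * Real.pi * Complex.I * z * τ).re = 2 * Real.pi * (-(τ * z.im)) := by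
      simp; ring
    rw [this, mul_assoc (2 * Real.pi)]
    gcongr
    calc -(τ * z.im) ≤ |τ * z.im| := neg_le_abs _
      _ = |τ| * |z.im| := abs_mul _ _
      _ ≤ _ := by gcongr; exact abs_le.mpr hτ
  refine ⟨fun z => ∫ τ in Set.Icc (-A) A, m τ * Complex.exp (2 * Real.pi * Complex.I * z * τ),
    ?_, ?_, ?_⟩
  · intro z₀
    have hcont : ∀ z : ℂ, Continuous fun τ : ℝ =>
        m τ * Complex.exp (2 * Real.pi * Complex.I * z * τ) := fun z => by fun_prop
    refine (hasDerivAt_integral_of_dominated_loc_of_deriv_le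
      (μ := volume.restrict (Set.Icc (-A) A))
      (F := fun z (τ : ℝ) => m τ * Complex.exp (2 * Real.pi * Complex.I * z * τ))
      (F' := fun z (τ : ℝ) => m τ * (Complex.exp (2 * Real.pi * Complex.I * z * τ) *
        (2 * Real.pi * Complex.I * τ)))
      (bound := fun _ => K * (Real.exp (2 * Real.pi * A * (‖z₀‖ + 1)) * (2 * Real.pi * A)))
      (s := ball z₀ 1) (ball_mem_nhds z₀ one_pos) (Eventually.of_forall fun z =>
        (hcont z).aestronglyMeasurable) ((hcont z₀).continuousOn.integrableOn_compact
          isCompact_Icc) (Continuous.aestronglyMeasurable (by fun_prop))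
          ?_ ?_ ?_).2.differentiableAt
    · refine (ae_restrict_mem measurableSet_Icc).mono fun τ hτ z hz => ?_
      rw [norm_mul, norm_mul]
      gcongr
      · exact hK τ
      · refine (hexp z τ hτ).trans ?_
        gcongr
        refine (Complex.abs_im_le_norm z).trans ?_
        have h1 : ‖z - z₀‖ < 1 := by simpa [dist_eq_norm] using hz
        have h2 := norm_sub_norm_le z z₀
        linarith
      · simp only [norm_mul, Complex.norm_ofNat, Complex.norm_real, Complex.norm_I, mul_one,
          Real.norm_eq_abs, abs_of_pos Real.pi_pos]
        gcongr
        exact abs_le.mpr hτ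
    · exact integrable_const _
    · refine Eventually.of_forall fun τ z _ => ?_
      refine HasDerivAt.const_mul _ (HasDerivAt.cexp ?_)
      have := ((hasDerivAt_id z).const_mul (2 * Real.pi * Complex.I)).mul_const (τ : ℂ)
      simpa using this
  · intro z
    refine (norm_setIntegral_le_of_norm_le_const (C := K * Real.exp (2 * Real.pi * A * |z.im|))
      hfinite fun τ hτ => ?_).trans ?_
    · rw [norm_mul]
      exact mul_le_mul (hK τ) (hexp z τ hτ) (norm_nonneg _) hK0
    · rw [Measure.real, Real.volume_Icc, ENNReal.toReal_ofReal (by linarith)]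
      apply le_of_eq; ring
  · intro t
    beta_reduce
    rw [Real.fourierInv_eq', setIntegral_eq_integral_of_forall_compl_eq_zero]
    · congr 1
      ext τ
      rw [smul_eq_mul, mul_comm]
      congr 2
      simp
      ring
    · intro τ hτ
      rw [hs τ, zero_mul]
      rw [Set.mem_Icc, ← abs_le] at hτ
      linarith

lemma exists_Icc_superset_of_abs_sub_le {T : Set ℝ} {L : ℝ}
    (hT : ∀ x ∈ T, ∀ y ∈ T, |x - y| ≤ L) : ∃ c, ∀ x ∈ T, |x - c| ≤ L / 2 := by
  rcases T.eq_empty_or_nonempty with rfl | ⟨x₀, hx₀⟩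
  · exact ⟨0, by simp⟩
  · have hbdd : BddBelow T := ⟨x₀ - L, fun y hy => by
      have := abs_le.mp (hT x₀ hx₀ y hy); linarith⟩
    refine ⟨sInf T + L / 2, fun x hx => ?_⟩
    have h1 := csInf_le hbdd hx
    have h2 : x - L ≤ sInf T := le_csInf ⟨x₀, hx₀⟩ fun y hy => by
      have := abs_le.mp (hT x hx y hy); linarith
    rw [abs_le]; constructor <;> linarith

lemma norm_fourierInv_comp_add_right (m : ℝ → ℂ) (c t : ℝ) :
    ‖𝓕⁻ (fun τ => m (τ + c)) t‖ = ‖𝓕⁻ m t‖ := by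
  have : 𝓕⁻ m t = Complex.exp (2 * Real.pi * c * t * Complex.I) * 𝓕⁻ (fun τ => m (τ + c)) t := by
    rw [Real.fourierInv_eq', Real.fourierInv_eq', ← integral_const_mul,
      ← integral_add_right_eq_self _ c]
    congr 1
    ext τ
    simp only [smul_eq_mul]
    rw [← mul_assoc, ← Complex.exp_add]
    congr 2
    simp
    ring
  rw [this, norm_mul, Complex.norm_exp]
  simp

/-- Orthonormal coordinates on the plane with prescribed second axis. -/
lemma exists_measurableEquiv_prod {v : EuclideanSpace ℝ (Fin 2)} (hv : ‖v‖ = 1) :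
    ∃ (u : EuclideanSpace ℝ (Fin 2)) (e : ℝ × ℝ ≃ᵐ EuclideanSpace ℝ (Fin 2)),
      ‖u‖ = 1 ∧ ⟪u, v⟫ = 0 ∧ MeasurePreserving e volume volume ∧ ∀ p, e p = p.1 • u + p.2 • v := by
  obtain ⟨b, hb⟩ := Orthonormal.exists_orthonormalBasis_extension_of_card_eq (𝕜 := ℝ)
    (E := EuclideanSpace ℝ (Fin 2)) (ι := Fin 2) (by simp) (v := fun _ => v) (s := {1})
    (by
      constructor
      · intro i; simpa using hv
      · intro i j hij; exact (hij (Subsingleton.elim _ _)).elim)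
  have hb1 : b 1 = v := hb 1 rfl
  refine ⟨b 0, (MeasurableEquiv.finTwoArrow.symm.trans
    (MeasurableEquiv.toLp 2 (Fin 2 → ℝ))).trans b.measurableEquiv.symm, b.norm_eq_one 0, ?_, ?_, ?_⟩
  · rw [← hb1]; exact b.inner_eq_zero (by simp)
  · refine MeasurePreserving.trans (MeasurePreserving.trans
      (volume_preserving_finTwoArrow ℝ).symm
      (EuclideanSpace.volume_preserving_symm_measurableEquiv_toLp (Fin 2)).symm)
      b.measurePreserving_measurableEquiv.symm
  · intro p
    have : ∀ w : EuclideanSpace ℝ (Fin 2), b.measurableEquiv.symm w = b.repr.symm w := fun w => rfl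
    simp only [MeasurableEquiv.trans_apply, this]
    rw [← b.sum_repr_symm, Fin.sum_univ_two, hb1]
    rfl

lemma fourier_fourier_slice {u v : EuclideanSpace ℝ (Fin 2)} (hu : ‖u‖ = 1) (hv : ‖v‖ = 1)
    (huv : ⟪u, v⟫ = 0) {e : ℝ × ℝ ≃ᵐ EuclideanSpace ℝ (Fin 2)}
    (he : MeasurePreserving e volume volume)
    (hep : ∀ p, e p = p.1 • u + p.2 • v) {f : EuclideanSpace ℝ (Fin 2) → ℂ} (hf : Integrable f)
    (σ τ : ℝ) :
    𝓕 (fun t : ℝ => (𝓕 (fun s : ℝ => f (s • u + t • v)) : ℝ → ℂ) σ) τ = 𝓕 f (σ • u + τ • v) := by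
  have hvu : ⟪v, u⟫ = 0 := by rw [real_inner_comm]; exact huv
  rw [Real.fourier_eq, Real.fourier_eq]
  have hi : Integrable (fun x => Real.fourierChar (-⟪x, σ • u + τ • v⟫) • f x) :=
    (VectorFourier.fourierIntegral_convergent_iff Real.continuous_fourierChar
      (L := innerₗ (EuclideanSpace ℝ (Fin 2))) continuous_inner _).2 hf
  have hi2 := (he.integrable_comp_emb e.measurableEmbedding).2 hi
  rw [← he.integral_comp e.measurableEmbedding, Measure.volume_eq_prod, integral_prod_symm]
  · congr 1
    ext t
    rw [Real.fourier_eq, Circle.smul_def, ← integral_smul]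
    congr 1
    ext s
    rw [hep, ← Circle.smul_def, smul_smul, ← AddChar.map_add_eq_mul]
    congr 2
    simp only [inner_add_left, inner_add_right, inner_smul_left, inner_smul_right, huv, hvu,
      real_inner_self_eq_norm_sq, hu, hv]
    simp
  · exact hi2

/-- The Fourier transform of `g` in the first of the two coordinates along `u` and `v`. -/
def sliceFourier (u v : V) (g : V → ℂ) (s t : ℝ) : ℂ :=
  (𝓕 (fun s' : ℝ => g (s' • u + t • v)) : ℝ → ℂ) s

section Plane

variable {u v : EuclideanSpace ℝ (Fin 2)} {g : EuclideanSpace ℝ (Fin 2) → ℂ} {C : ℝ}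
  {e : ℝ × ℝ ≃ᵐ EuclideanSpace ℝ (Fin 2)}

lemma integrable_comp_line (hg : Continuous g)
    (hC : ∀ s t : ℝ, ‖g (s • u + t • v)‖ ≤ C * ((1 + s ^ 2)⁻¹ * (1 + t ^ 2)⁻¹)) (t : ℝ) :
    Integrable fun s : ℝ => g (s • u + t • v) := by
  refine Integrable.mono' ((integrable_inv_one_add_sq.mul_const _).const_mul C)
    (Continuous.aestronglyMeasurable (by fun_prop)) (Eventually.of_forall fun s => hC s t)

lemma norm_sliceFourier_le (hg : Continuous g)
    (hC : ∀ s t : ℝ, ‖g (s • u + t • v)‖ ≤ C * ((1 + s ^ 2)⁻¹ * (1 + t ^ 2)⁻¹)) (s t : ℝ) :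
    ‖sliceFourier u v g s t‖ ≤ C * Real.pi * (1 + t ^ 2)⁻¹ := by
  refine (VectorFourier.norm_fourierIntegral_le_integral_norm _ _ _ _ _).trans ?_
  calc ∫ s : ℝ, ‖g (s • u + t • v)‖ ≤ ∫ s : ℝ, C * ((1 + s ^ 2)⁻¹ * (1 + t ^ 2)⁻¹) :=
        integral_mono (integrable_comp_line hg hC t).norm
          ((integrable_inv_one_add_sq.mul_const _).const_mul C) fun s => hC s t
    _ = _ := by
      rw [integral_const_mul, integral_mul_const, integral_univ_inv_one_add_sq]; ring

lemma continuous_sliceFourier_left (hg : Continuous g)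
    (hC : ∀ s t : ℝ, ‖g (s • u + t • v)‖ ≤ C * ((1 + s ^ 2)⁻¹ * (1 + t ^ 2)⁻¹)) (t : ℝ) :
    Continuous fun s => sliceFourier u v g s t :=
  VectorFourier.fourierIntegral_continuous Real.continuous_fourierChar
    (L := innerₗ ℝ) continuous_inner (integrable_comp_line hg hC t)

lemma continuous_sliceFourier_right (hg : Continuous g)
    (hC : ∀ s t : ℝ, ‖g (s • u + t • v)‖ ≤ C * ((1 + s ^ 2)⁻¹ * (1 + t ^ 2)⁻¹)) (s : ℝ) :
    Continuous fun t => sliceFourier u v g s t := by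
  have hC0 : 0 ≤ C := by simpa using (norm_nonneg _).trans (hC 0 0)
  simp only [sliceFourier, Real.fourier_eq]
  refine continuous_of_dominated (bound := fun s : ℝ => C * (1 + s ^ 2)⁻¹)
    (fun t => Continuous.aestronglyMeasurable ?_)
    (fun t => Eventually.of_forall fun s' => ?_) (integrable_inv_one_add_sq.const_mul C)
    (Eventually.of_forall fun s' => by fun_prop)
  · exact (Real.continuous_fourierChar.comp (by fun_prop)).smul (by fun_prop)
  · rw [Circle.norm_smul]
    refine (hC s' t).trans ?_
    gcongr
    refine mul_le_of_le_one_right (by positivity) (inv_le_one_of_one_le₀ ?_)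
    nlinarith [sq_nonneg t]

lemma integrable_sliceFourier_right (hg : Continuous g)
    (hC : ∀ s t : ℝ, ‖g (s • u + t • v)‖ ≤ C * ((1 + s ^ 2)⁻¹ * (1 + t ^ 2)⁻¹)) (s : ℝ) :
    Integrable fun t => sliceFourier u v g s t :=
  Integrable.mono' (integrable_inv_one_add_sq.const_mul (C * Real.pi))
    (continuous_sliceFourier_right hg hC s).aestronglyMeasurable
    (Eventually.of_forall fun t => norm_sliceFourier_le hg hC s t)

lemma integrable_of_norm_le_prod (he : MeasurePreserving e volume volume)
    (hep : ∀ p, e p = p.1 • u + p.2 • v) (hg : Continuous g)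
    (hC : ∀ s t : ℝ, ‖g (s • u + t • v)‖ ≤ C * ((1 + s ^ 2)⁻¹ * (1 + t ^ 2)⁻¹)) :
    Integrable g := by
  rw [← he.integrable_comp_emb e.measurableEmbedding]
  refine Integrable.mono'
    ((integrable_inv_one_add_sq.mul_prod integrable_inv_one_add_sq).const_mul C)
    ?_ (Eventually.of_forall fun p => ?_)
  · exact (hg.measurable.comp e.measurable).aestronglyMeasurable
  · simp only [Function.comp, hep]
    exact hC p.1 p.2

/-- On each slice, the partial Fourier transform of a function whose spectrum has chords of length
at most `L` extends to an entire function of exponential type. -/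
lemma exists_entire_of_sliceFourier (hu : ‖u‖ = 1) (hv : ‖v‖ = 1)
    (huv : ⟪u, v⟫ = 0) (he : MeasurePreserving e volume volume)
    (hep : ∀ p, e p = p.1 • u + p.2 • v) (hg : Continuous g)
    (hC : ∀ s t : ℝ, ‖g (s • u + t • v)‖ ≤ C * ((1 + s ^ 2)⁻¹ * (1 + t ^ 2)⁻¹))
    {T : Set (EuclideanSpace ℝ (Fin 2))} (hT : ∀ ξ, ξ ∉ T → 𝓕 g ξ = 0) {L : ℝ} (hL : 0 ≤ L)
    (hTL : ∀ p ∈ T, ∀ q ∈ T, ∀ τ : ℝ, p - q = τ • v → |τ| ≤ L) (s : ℝ) :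
    ∃ E : ℂ → ℂ, Differentiable ℂ E ∧
      (∀ z, ‖E z‖ ≤ (∫ x, ‖g x‖) * L * Real.exp (Real.pi * L * |z.im|)) ∧
      ∀ t : ℝ, ‖E t‖ = ‖sliceFourier u v g s t‖ := by
  have hgi := integrable_of_norm_le_prod he hep hg hC
  have hΦ := continuous_sliceFourier_right hg hC s
  have hΦi := integrable_sliceFourier_right hg hC s
  set m : ℝ → ℂ := 𝓕 (fun t => sliceFourier u v g s t) with hm
  have hmg : ∀ τ, m τ = 𝓕 g (s • u + τ • v) := fun τ =>
    fourier_fourier_slice hu hv huv he hep hgi s τ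
  have hmc : Continuous m := VectorFourier.fourierIntegral_continuous Real.continuous_fourierChar
    (L := innerₗ ℝ) continuous_inner hΦi
  have hmK : ∀ τ, ‖m τ‖ ≤ ∫ x, ‖g x‖ := fun τ => by
    rw [hmg]
    exact VectorFourier.norm_fourierIntegral_le_integral_norm _ _ _ _ _
  obtain ⟨c, hc⟩ := exists_Icc_superset_of_abs_sub_le (T := {τ : ℝ | s • u + τ • v ∈ T}) (L := L)
    fun x hx y hy => hTL _ hx _ hy (x - y) (by rw [sub_smul]; abel)
  have hms : ∀ τ, L / 2 < |τ| → m (τ + c) = 0 := fun τ hτ => by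
    rw [hmg]
    refine hT _ fun h => ?_
    have := hc _ h
    simp only [add_sub_cancel_right] at this
    linarith
  obtain ⟨E, hE1, hE2, hE3⟩ := exists_entire_extension_fourierInv (by positivity : 0 ≤ L / 2)
    (hmc.comp (continuous_add_const c)) hms (fun τ => hmK _)
  refine ⟨E, hE1, fun z => (hE2 z).trans (le_of_eq ?_), fun t => ?_⟩
  · congr 2 <;> ring
  · have hmi : Integrable m := by
      refine hmc.integrable_of_hasCompactSupport
        (HasCompactSupport.intro (isCompact_Icc (a := c - L / 2) (b := c + L / 2)) fun x hx => ?_)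
      have := hms (x - c) (by
        by_contra! h
        rw [abs_le] at h
        exact hx ⟨by linarith, by linarith⟩)
      simpa using this
    rw [hE3]
    have h1 := norm_fourierInv_comp_add_right m c t
    rw [hm, hΦ.fourierInv_fourier_eq hΦi hmi] at h1
    exact h1

lemma exists_lower_bound_sliceFourier (hu : ‖u‖ = 1) (hv : ‖v‖ = 1)
    (huv : ⟪u, v⟫ = 0) (he : MeasurePreserving e volume volume)
    (hep : ∀ p, e p = p.1 • u + p.2 • v) (hg : Continuous g)
    (hC : ∀ s t : ℝ, ‖g (s • u + t • v)‖ ≤ C * ((1 + s ^ 2)⁻¹ * (1 + t ^ 2)⁻¹)) {W : ℝ}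
    (hW : 0 < W) (hT : ∀ ξ, W < ‖ξ‖ → 𝓕 g ξ = 0) (hg0 : 1 / 2 ≤ ‖g 0‖) :
    ∃ s, 1 / (8 * W) ≤ ‖sliceFourier u v g s 0‖ := by
  by_contra! hlt
  have hgi := integrable_of_norm_le_prod he hep hg hC
  have hzero : ∀ s, W < |s| → sliceFourier u v g s 0 = 0 := by
    intro s hs
    have hm : (𝓕 (fun t => sliceFourier u v g s t) : ℝ → ℂ) = 0 := by
      ext τ
      refine (fourier_fourier_slice hu hv huv he hep hgi s τ).trans (hT _ (hs.trans_le ?_))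
      have h1 : s = ⟪u, s • u + τ • v⟫ := by
        rw [inner_add_right, inner_smul_right, inner_smul_right, huv,
          real_inner_self_eq_norm_sq, hu]; ring
      calc |s| = |⟪u, s • u + τ • v⟫| := by rw [← h1]
        _ ≤ ‖u‖ * ‖s • u + τ • v‖ := abs_real_inner_le_norm _ _
        _ = _ := by rw [hu, one_mul]
    have h2 := (continuous_sliceFourier_right hg hC s).fourierInv_fourier_eq
      (integrable_sliceFourier_right hg hC s) (by rw [hm]; exact integrable_zero _ _ _)
    rw [hm] at h2
    have h3 := congrFun h2 0
    rw [← h3, Real.fourierInv_eq]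
    simp
  have hcont := continuous_sliceFourier_left hg hC 0
  have hint : Integrable fun s => sliceFourier u v g s 0 := by
    refine hcont.integrable_of_hasCompactSupport
      (HasCompactSupport.intro (isCompact_Icc (a := -W) (b := W)) fun s hs => hzero s ?_)
    rw [Set.mem_Icc, ← abs_le] at hs
    linarith
  have h2 : 𝓕⁻ (fun s => sliceFourier u v g s 0) = fun s' : ℝ => g (s' • u + (0 : ℝ) • v) :=
    Continuous.fourierInv_fourier_eq (by fun_prop) (integrable_comp_line hg hC 0) hint
  have h3 := congrFun h2 0
  rw [Real.fourierInv_eq] at h3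
  simp only [inner_zero_right, AddChar.map_zero_eq_one, one_smul, zero_smul, add_zero] at h3
  rw [← h3, ← setIntegral_eq_integral_of_forall_compl_eq_zero (s := Set.Icc (-W) W)] at hg0
  · have h4 := norm_setIntegral_le_of_norm_le_const (μ := volume) (s := Set.Icc (-W) W)
      (f := fun s => sliceFourier u v g s 0) (by simp) fun s _ => (hlt s).le
    rw [Measure.real, Real.volume_Icc, ENNReal.toReal_ofReal (by linarith)] at h4
    have : 1 / (8 * W) * (W - -W) = 1 / 4 := by field_simp; ring
    linarith
  · intro s hs
    rw [Set.mem_Icc, ← abs_le] at hs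
    exact hzero s (by linarith)

end Plane

lemma exists_lower_bound_on_lines {Ω : Set (EuclideanSpace ℝ (Fin 2))} (hΩ : IsCompact Ω)
    {v : EuclideanSpace ℝ (Fin 2)} (hv : ‖v‖ = 1) {ε L D t₀ δ : ℝ} (hε : 0 < ε) (hL : 0 ≤ L)
    (hLD : L < D) (ht₀ : 0 < t₀) (hδ : 0 < δ)
    (hΩL : ∀ p ∈ Ω + closedBall 0 ε, ∀ q ∈ Ω + closedBall 0 ε, ∀ τ : ℝ, p - q = τ • v → |τ| ≤ L)
    {H : Set ℝ} (hH : ∀ x ∈ H, ∀ y ∈ H, x ≠ y → δ ≤ dist x y)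
    (hcard : ∀ c t, t₀ ≤ t → 2 * D * t ≤ Nat.card ↥(H ∩ closedBall c t)) :
    ∃ ε₁ > 0, ∀ f, MemBernstein Ω f → (∀ x, ‖f x‖ ≤ 1) → ∀ x₀, 1 / 2 ≤ ‖f x₀‖ →
      ∃ a ∈ H, ∃ y, ⟪y, v⟫ = 0 ∧ ε₁ ≤ ‖f (y + a • v)‖ := by
  obtain ⟨u, e, hu, huv, he, hep⟩ := exists_measurableEquiv_prod hv
  obtain ⟨η, k, hη, hηs, hηk, hk0, hk1⟩ := exists_schwartz_kernel (EuclideanSpace ℝ (Fin 2)) hε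
  obtain ⟨C, hC0, hC⟩ := k.exists_norm_le_div_one_add_pow 4
  have hcoord : ∀ s t : ℝ, ⟪s • u + t • v, u⟫ = s ∧ ⟪s • u + t • v, v⟫ = t := fun s t => by
    have hvu : ⟪v, u⟫ = 0 := by rw [real_inner_comm]; exact huv
    constructor <;>
    simp [inner_add_left, inner_smul_left, huv, hvu, hu, hv]
  have hkC : ∀ s t : ℝ, ‖k (s • u + t • v)‖ ≤ C * ((1 + s ^ 2)⁻¹ * (1 + t ^ 2)⁻¹) := by
    intro s t
    refine (hC _).trans ?_
    rw [div_eq_mul_inv, ← mul_inv]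
    have hs : |s| ≤ ‖s • u + t • v‖ := by
      have := abs_real_inner_le_norm (s • u + t • v) u
      rwa [(hcoord s t).1, hu, mul_one] at this
    have ht : |t| ≤ ‖s • u + t • v‖ := by
      have := abs_real_inner_le_norm (s • u + t • v) v
      rwa [(hcoord s t).2, hv, mul_one] at this
    have h1 : ∀ r : ℝ, |r| ≤ ‖s • u + t • v‖ → 1 + r ^ 2 ≤ (1 + ‖s • u + t • v‖) ^ 2 := by
      intro r hr
      nlinarith [abs_nonneg r, sq_abs r]
    gcongr
    calc (1 + s ^ 2) * (1 + t ^ 2) ≤ (1 + ‖s • u + t • v‖) ^ 2 * (1 + ‖s • u + t • v‖) ^ 2 := by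
          gcongr
          · exact h1 s hs
          · exact h1 t ht
      _ = _ := by ring
  have hΩ' : IsCompact (Ω + closedBall 0 ε) := hΩ.add (isCompact_closedBall 0 ε)
  obtain ⟨W, hW0, hW⟩ : ∃ W > 0, ∀ x ∈ Ω + closedBall 0 ε, ‖x‖ ≤ W :=
    hΩ'.isBounded.exists_pos_norm_le
  set K := ∫ x, ‖k x‖ with hK
  have hK0 : 0 ≤ K := integral_nonneg fun _ => norm_nonneg _
  obtain ⟨ε₂, hε₂, hlow⟩ := exists_lower_bound_on_separated_set (δ := δ) (M := K * L + 1)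
    (c := 1 / (8 * W)) hL hLD ht₀ hδ (by positivity) (by positivity)
  refine ⟨ε₂ / (2 * (C * Real.pi)), by positivity, fun f hf hf1 x₀ hx₀ => ?_⟩
  by_contra! hsmall
  set g : EuclideanSpace ℝ (Fin 2) → ℂ := fun x => f (x + x₀) * k x with hg
  have hgB : MemBernstein (Ω + closedBall 0 ε) g :=
    (hf.comp_add_right x₀).mul_kernel hη hηs hηk hk1
  have hgk : ∀ x, ‖g x‖ ≤ ‖k x‖ := fun x => by
    rw [hg, norm_mul]
    exact mul_le_of_le_one_left (norm_nonneg _) (hf1 _)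
  have hgC : ∀ s t : ℝ, ‖g (s • u + t • v)‖ ≤ C * ((1 + s ^ 2)⁻¹ * (1 + t ^ 2)⁻¹) := fun s t =>
    (hgk _).trans (hkC s t)
  have hgi := integrable_of_norm_le_prod he hep hgB.1 hgC
  have hgK : ∫ x, ‖g x‖ ≤ K := integral_mono hgi.norm k.integrable.norm hgk
  have hgT : ∀ ξ, ξ ∉ Ω + closedBall 0 ε → 𝓕 g ξ = 0 := fun ξ hξ =>
    hgB.fourier_eq_zero hΩ'.isClosed hgi hξ
  obtain ⟨s, hs⟩ := exists_lower_bound_sliceFourier hu hv huv he hep hgB.1 hgC hW0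
    (fun ξ hξ => hgT ξ fun h => (hW ξ h).not_gt hξ) (by simpa [hg, hk0] using hx₀)
  obtain ⟨E, hE1, hE2, hE3⟩ := exists_entire_of_sliceFourier hu hv huv he hep hgB.1 hgC hgT hL hΩL s
  set b := ⟪x₀, v⟫ with hb
  obtain ⟨t, ht, htE⟩ := hlow {t | t + b ∈ H}
    (fun x hx y hy hxy => by
      have := hH _ hx _ hy (fun h => hxy (add_right_cancel h))
      rwa [dist_add_right] at this)
    (fun t ht => by
      refine (hcard b t ht).trans (le_of_eq ?_)
      congr 1
      refine Nat.card_congr ?_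
      refine (Equiv.subRight b).subtypeEquiv fun x => ?_
      simp [Real.dist_eq, mem_closedBall])
    E hE1
    (fun z => (hE2 z).trans (by gcongr; nlinarith))
    (by have := hE3 0; rw [Complex.ofReal_zero] at this; rw [this]; exact hs)
  rw [hE3] at htE
  have hline : ∀ s' : ℝ, ‖f (s' • u + t • v + x₀)‖ ≤ ε₂ / (2 * (C * Real.pi)) := by
    intro s'
    refine le_of_eq_of_le ?_ (hsmall (t + b) ht (s' • u + (x₀ - b • v)) ?_).le
    · congr 2
      rw [add_smul]; abel
    · rw [inner_add_left, inner_smul_left, huv, inner_sub_left, inner_smul_left,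
        real_inner_self_eq_norm_sq, hv]
      simp [hb]
  have hub : ‖sliceFourier u v g s t‖ ≤ ε₂ / 2 := by
    refine (VectorFourier.norm_fourierIntegral_le_integral_norm _ _ _ _ _).trans ?_
    calc ∫ s' : ℝ, ‖g (s' • u + t • v)‖
        ≤ ∫ s' : ℝ, ε₂ / (2 * (C * Real.pi)) * (C * (1 + s' ^ 2)⁻¹) := by
          refine integral_mono (integrable_comp_line hgB.1 hgC t).norm
            ((integrable_inv_one_add_sq.const_mul _).const_mul _) fun s' => ?_
          simp only [hg, norm_mul]
          refine mul_le_mul (hline s') ((hkC s' t).trans ?_) (norm_nonneg _) (by positivity)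
          gcongr
          refine mul_le_of_le_one_right (by positivity) (inv_le_one_of_one_le₀ ?_)
          nlinarith [sq_nonneg t]
      _ = ε₂ / 2 := by
          rw [integral_const_mul, integral_const_mul, integral_univ_inv_one_add_sq]
          field_simp
  linarith

lemma lowerUniformDensity_nonneg {X : Type*} [NormedAddCommGroup X] [MeasureSpace X]
    (Λ : Set X) : 0 ≤ lowerUniformDensity Λ := by
  rw [lowerUniformDensity, liminf_eq]
  exact Real.sSup_nonneg' ⟨0, Eventually.of_forall fun r => Real.iInf_nonneg fun x => by positivity,
    le_rfl⟩

lemma exists_le_natCard_of_lt_lowerUniformDensity {H : Set ℝ} {D : ℝ}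
    (hD : D < lowerUniformDensity H) :
    ∃ t₀ > 0, ∀ c t, t₀ ≤ t → 2 * D * t ≤ Nat.card ↥(H ∩ closedBall c t) := by
  have hnn : ∀ r x : ℝ, 0 ≤
      (Nat.card ↥(H ∩ closedBall x r) : ℝ) / (volume (closedBall x r)).toReal :=
    fun r x => by positivity
  have h1 := eventually_lt_of_lt_liminf hD
    ⟨0, eventually_map.2 <| Eventually.of_forall fun r => Real.iInf_nonneg (hnn r)⟩
  obtain ⟨t₀, ht₀⟩ := eventually_atTop.1 h1
  refine ⟨max t₀ 1, by positivity, fun c t ht => ?_⟩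
  have ht1 : 0 < t := one_pos.trans_le ((le_max_right _ _).trans ht)
  have h2 := (ht₀ t ((le_max_left _ _).trans ht)).le.trans
    (ciInf_le ⟨0, Set.forall_mem_range.2 (hnn t)⟩ c)
  rw [Real.volume_closedBall, ENNReal.toReal_ofReal (by positivity), le_div_iff₀ (by positivity)]
    at h2
  linarith

lemma abs_le_of_smul_notMem {W : Type*} [NormedAddCommGroup W] [NormedSpace ℝ W]
    {S : Set W} (hSc : IsClosed S) (hSv : Convex ℝ S)
    (h0 : (0 : W) ∈ S) (hSs : ∀ x ∈ S, -x ∈ S) {v : W} (hv : ‖v‖ = 1) {d : ℝ} (hd : 0 ≤ d)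
    (hdS : d • v ∉ S) :
    ∃ ρ > 0, ρ ≤ d ∧ ∀ w ∈ S, ∀ τ : ℝ, ‖τ • v - w‖ ≤ ρ / 4 → |τ| ≤ d - ρ / 2 := by
  obtain ⟨ρ, hρ, hball⟩ := Metric.isOpen_iff.1 hSc.isOpen_compl _ hdS
  have hfar : ∀ w ∈ S, ρ ≤ ‖d • v - w‖ := fun w hw => by
    by_contra! h
    exact hball (by rwa [mem_ball, dist_comm, dist_eq_norm]) hw
  refine ⟨ρ, hρ, ?_, ?_⟩
  · have := hfar 0 h0
    rwa [sub_zero, norm_smul, hv, mul_one, Real.norm_eq_abs, abs_of_nonneg hd] at this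
  · have main : ∀ w ∈ S, ∀ τ : ℝ, ‖τ • v - w‖ ≤ ρ / 4 → τ ≤ d - ρ / 2 := by
      intro w hw τ hτ
      by_contra! hlt
      rcases le_or_gt d τ with hdτ | hdτ
      · rcases hd.eq_or_lt with rfl | hd0
        · exact hdS (by simpa using h0)
        have hτ0 : 0 < τ := hd0.trans_le hdτ
        have hmem : (d / τ) • w ∈ S := by
          have := hSv.starConvex h0 |>.smul_mem hw (by positivity : 0 ≤ d / τ)
            ((div_le_one hτ0).2 hdτ)
          exact this
        have h1 := hfar _ hmem
        have h2 : d • v - (d / τ) • w = (d / τ) • (τ • v - w) := by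
          rw [smul_sub, smul_smul]; congr 2; field_simp
        rw [h2, norm_smul, Real.norm_eq_abs, abs_of_nonneg (by positivity)] at h1
        have h3 : d / τ * ‖τ • v - w‖ ≤ ‖τ • v - w‖ :=
          mul_le_of_le_one_left (norm_nonneg _) ((div_le_one hτ0).2 hdτ)
        linarith
      · have h1 := hfar w hw
        have h2 : d • v - w = (d - τ) • v + (τ • v - w) := by rw [sub_smul]; abel
        have h3 := norm_add_le ((d - τ) • v) (τ • v - w)
        rw [← h2, norm_smul, hv, Real.norm_eq_abs, abs_of_pos (by linarith)] at h3
        linarith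
    intro w hw τ hτ
    rw [abs_le]
    refine ⟨?_, main w hw τ hτ⟩
    have := main (-w) (hSs w hw) (-τ) (by
      rwa [neg_smul, sub_neg_eq_add, neg_add_eq_sub, ← norm_neg, neg_sub])
    linarith

/-- Parallel lines with large lower density of heights form a sampling set. -/
theorem isSamplingSet_of_lowerUniformDensity {Ω : Set (EuclideanSpace ℝ (Fin 2))}
    (hΩ : IsCompact Ω) (hΩc : Convex ℝ Ω) (hΩn : Ω.Nonempty)
    {v : EuclideanSpace ℝ (Fin 2)} (hv : ‖v‖ = 1) {H : Set ℝ} (hH : UniformlyDiscrete H)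
    (hD : lowerUniformDensity H • v ∉ Ω - Ω) :
    IsSamplingSet Ω {x | ∃ a ∈ H, ∃ y : EuclideanSpace ℝ (Fin 2), ⟪y, v⟫ = 0 ∧ x = y + a • v} := by
  obtain ⟨p₀, hp₀⟩ := hΩn
  have hsub : IsCompact (Ω - Ω) := by rw [sub_eq_add_neg]; exact hΩ.add hΩ.neg
  obtain ⟨ρ, hρ, hρd, hS⟩ := abs_le_of_smul_notMem hsub.isClosed (hΩc.sub hΩc)
    ⟨p₀, hp₀, p₀, hp₀, sub_self _⟩
    (by rintro _ ⟨a, ha, b, hb, rfl⟩; exact ⟨b, hb, a, ha, by simp⟩) hv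
    (lowerUniformDensity_nonneg H) hD
  obtain ⟨δ, hδ, hsep⟩ := hH
  obtain ⟨t₀, ht₀, hcard⟩ := exists_le_natCard_of_lt_lowerUniformDensity (H := H)
    (D := lowerUniformDensity H - ρ / 4) (by linarith)
  obtain ⟨ε, hε, hlow⟩ := exists_lower_bound_on_lines hΩ hv (ε := ρ / 8)
    (L := lowerUniformDensity H - ρ / 2) (by linarith) (by linarith)
    (by linarith : _ < lowerUniformDensity H - ρ / 4) ht₀ hδ
    (by
      rintro _ ⟨a, ha, b, hb, rfl⟩ _ ⟨a', ha', b', hb', rfl⟩ τ hτ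
      refine hS (a - a') ⟨a, ha, a', ha', rfl⟩ τ ?_
      rw [← hτ]
      have h1 : a + b - (a' + b') - (a - a') = b - b' := by abel
      have h2 := norm_sub_le b b'
      rw [mem_closedBall_zero_iff] at hb hb'
      rw [h1]; linarith) hsep hcard
  refine ⟨1 / ε, by positivity, fun f hf x => ?_⟩
  obtain ⟨B, hB⟩ := hf.2.1
  have hbdd : BddAbove (Set.range fun x => ‖f x‖) := ⟨B, Set.forall_mem_range.2 hB⟩
  set M := ⨆ x, ‖f x‖ with hM
  have hfM : ∀ x, ‖f x‖ ≤ M := fun x => le_ciSup hbdd x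
  refine (hfM x).trans ?_
  rcases (norm_nonneg (f x)).trans (hfM x) |>.eq_or_lt with hM0 | hM0
  · rw [← hM0]
    refine mul_nonneg (by positivity) (Real.sSup_nonneg ?_)
    rintro _ ⟨p, -, rfl⟩
    exact norm_nonneg _
  obtain ⟨x₀, hx₀⟩ := exists_lt_of_lt_ciSup (f := fun x => ‖f x‖) (half_lt_self hM0)
  have hnorm : ∀ x, ‖((M : ℂ)⁻¹) * f x‖ = M⁻¹ * ‖f x‖ := fun x => by
    rw [norm_mul, norm_inv, Complex.norm_real, Real.norm_eq_abs, abs_of_pos hM0]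
  obtain ⟨a, ha, y, hy, hay⟩ := hlow _ (hf.const_mul (M : ℂ)⁻¹)
    (fun x => by rw [hnorm, inv_mul_le_one₀ hM0]; exact hfM x) x₀
    (by rw [hnorm, le_inv_mul_iff₀ hM0]; linarith)
  rw [hnorm, le_inv_mul_iff₀ hM0] at hay
  rw [one_div, le_inv_mul_iff₀ hε, mul_comm]
  refine hay.trans (le_csSup ⟨B, ?_⟩ ⟨_, ⟨a, ha, y, hy, rfl⟩, rfl⟩)
  rintro _ ⟨p, -, rfl⟩
  exact hB p

lemma MemBernstein.mono {Ω Ω' : Set V} (h : Ω ⊆ Ω') {f : V → ℂ} (hf : MemBernstein Ω f) :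
    MemBernstein Ω' f :=
  ⟨hf.1, hf.2.1, fun ψ a b d => hf.2.2 ψ a b (Set.subset_empty_iff.mp
    ((Set.inter_subset_inter_right _ h).trans d.subset))⟩

lemma integrable_fourier_of_contDiff {ψ : V → ℂ} (h1 : ContDiff ℝ (⊤ : ℕ∞) ψ)
    (h2 : HasCompactSupport ψ) : Integrable (𝓕 ψ) := by
  have := (𝓕 (h2.toSchwartzMap h1)).integrable (μ := volume)
  rwa [SchwartzMap.fourier_coe] at this

lemma MemBernstein.add {Ω : Set V} {f g : V → ℂ} (hf : MemBernstein Ω f)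
    (hg : MemBernstein Ω g) : MemBernstein Ω fun x => f x + g x := by
  obtain ⟨h1, ⟨C, hC⟩, h3⟩ := hf
  obtain ⟨h1', ⟨C', hC'⟩, h3'⟩ := hg
  refine ⟨by fun_prop, ⟨C + C', fun x => (norm_add_le _ _).trans (add_le_add (hC x) (hC' x))⟩,
    fun ψ a b d => ?_⟩
  have hi := integrable_fourier_of_contDiff a b
  simp_rw [add_mul]
  rw [integral_add (hi.bdd_mul h1.aestronglyMeasurable (Eventually.of_forall hC))
    (hi.bdd_mul h1'.aestronglyMeasurable (Eventually.of_forall hC')), h3 ψ a b d, h3' ψ a b d,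
    add_zero]

lemma MemBernstein.zero {Ω : Set V} : MemBernstein Ω fun _ => 0 :=
  ⟨continuous_const, ⟨0, by simp⟩, by simp⟩

lemma MemBernstein.sum {Ω : Set V} {ι : Type*} (s : Finset ι) {f : ι → V → ℂ}
    (hf : ∀ i ∈ s, MemBernstein Ω (f i)) : MemBernstein Ω fun x => ∑ i ∈ s, f i x := by
  classical
  induction s using Finset.induction_on with
  | empty => simpa using MemBernstein.zero
  | insert i s hi ih =>
    simp only [Finset.sum_insert hi]
    exact (hf i (by simp)).add (ih fun j hj => hf j (by simp [hj]))

/-- Superpositions of characters with frequencies in `Ω` belong to `B_Ω`. -/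
lemma memBernstein_integral {X : Type*} [MeasurableSpace X] {μ : Measure X} [SFinite μ]
    {Ω : Set V} {m : X → ℂ} (hm : Integrable m μ) {φ : X → V} (hφ : Measurable φ)
    (hΩ : ∀ᵐ ξ ∂μ, m ξ ≠ 0 → φ ξ ∈ Ω) :
    MemBernstein Ω fun x => ∫ ξ, m ξ * Real.fourierChar ⟪x, φ ξ⟫ ∂μ := by
  have hchar : Measurable fun t : ℝ => (Real.fourierChar t : ℂ) :=
    (continuous_subtype_val.comp Real.continuous_fourierChar).measurable
  have hnorm : ∀ t : ℝ, ‖(Real.fourierChar t : ℂ)‖ = 1 := fun t => Circle.norm_coe _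
  have hmeas : ∀ x, AEStronglyMeasurable (fun ξ => m ξ * Real.fourierChar ⟪x, φ ξ⟫) μ := fun x =>
    hm.aestronglyMeasurable.mul
      (hchar.comp (measurable_const.inner hφ)).aestronglyMeasurable
  refine ⟨?_, ⟨∫ ξ, ‖m ξ‖ ∂μ, fun x => ?_⟩, fun ψ a b d => ?_⟩
  · refine continuous_of_dominated hmeas (bound := fun ξ => ‖m ξ‖)
      (fun x => Eventually.of_forall fun ξ => by rw [norm_mul, hnorm, mul_one]) hm.norm
      (Eventually.of_forall fun ξ => ?_)
    exact continuous_const.mul (continuous_subtype_val.comp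
      (Real.continuous_fourierChar.comp (by fun_prop)))
  · refine (norm_integral_le_integral_norm _).trans (le_of_eq ?_)
    simp_rw [norm_mul, hnorm, mul_one]
  · have hi := integrable_fourier_of_contDiff a b
    have hψ : Integrable ψ := a.continuous.integrable_of_hasCompactSupport b
    have hinv := a.continuous.fourierInv_fourier_eq hψ hi
    simp_rw [← integral_mul_const]
    rw [integral_integral_swap]
    · rw [← integral_zero X ℂ (μ := μ)]
      refine integral_congr_ae (hΩ.mono fun ξ hξ => ?_)
      have h1 : ∫ x, m ξ * Real.fourierChar ⟪x, φ ξ⟫ * 𝓕 ψ x = m ξ * ψ (φ ξ) := by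
        rw [← congrFun hinv (φ ξ), Real.fourierInv_eq, ← integral_const_mul]
        congr 1
        ext x
        rw [Circle.smul_def, smul_eq_mul, mul_assoc]
      dsimp only
      rw [h1]
      by_cases h0 : m ξ = 0
      · simp [h0]
      · rw [image_eq_zero_of_notMem_tsupport (f := ψ) fun h =>
          (Set.eq_empty_iff_forall_notMem.1 d) _ ⟨h, hξ h0⟩, mul_zero]
    · have hp : Integrable (fun z : V × X => 𝓕 ψ z.1 * m z.2) (volume.prod μ) := hi.mul_prod hm
      have hc : Measurable fun z : V × X => (Real.fourierChar ⟪z.1, φ z.2⟫ : ℂ) :=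
        hchar.comp (measurable_fst.inner (hφ.comp measurable_snd))
      refine (hp.bdd_mul (c := 1) hc.aestronglyMeasurable
        (Eventually.of_forall fun z => (hnorm _).le)).congr (Eventually.of_forall fun z => ?_)
      simp only [Function.uncurry]
      ring

lemma MemBernstein.comp_mul_left {a r : ℝ} (hr : 0 < r) {F : ℝ → ℂ}
    (hF : MemBernstein (closedBall 0 a) F) :
    MemBernstein (closedBall 0 (r * a)) fun x => F (r * x) := by
  obtain ⟨h1, ⟨C, hC⟩, h3⟩ := hF
  refine ⟨by fun_prop, ⟨C, fun x => hC _⟩, fun ψ hψ1 hψ2 d => ?_⟩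
  have key := h3 (fun ξ => ψ (r * ξ)) (hψ1.comp (contDiff_const.mul contDiff_id))
    (hψ2.comp_homeomorph (Homeomorph.mulLeft₀ r hr.ne')) (by
      rw [Set.eq_empty_iff_forall_notMem]
      rintro ξ ⟨hξ, hξa⟩
      have h2 : r * ξ ∈ tsupport ψ :=
        tsupport_comp_subset_preimage ψ (f := fun ξ => r * ξ) (by fun_prop) hξ
      refine (Set.eq_empty_iff_forall_notMem.1 d) _ ⟨h2, ?_⟩
      rw [mem_closedBall_zero_iff, Real.norm_eq_abs] at hξa ⊢
      rw [abs_mul, abs_of_pos hr]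
      gcongr)
  have h2 : ∀ x, 𝓕 (fun ξ => ψ (r * ξ)) (r * x) = (r⁻¹ : ℝ) * 𝓕 ψ x := by
    intro x
    rw [Real.fourier_eq, Real.fourier_eq]
    have := Measure.integral_comp_mul_left (fun ξ => Real.fourierChar (-⟪ξ, x⟫) • ψ ξ) r
    rw [abs_of_pos (by positivity)] at this
    rw [← Complex.real_smul, ← this]
    congr 1
    ext ξ
    congr 3
    simp
    ring
  have h4 := Measure.integral_comp_mul_left (fun x => F x * 𝓕 (fun ξ => ψ (r * ξ)) x) r
  rw [key, smul_zero] at h4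
  simp_rw [h2] at h4
  have h5 : ∫ x, F (r * x) * ((r⁻¹ : ℝ) * 𝓕 ψ x) = (r⁻¹ : ℝ) * ∫ x, F (r * x) * 𝓕 ψ x := by
    rw [← integral_const_mul]; congr 1; ext x; ring
  rw [h5] at h4
  have : ((r⁻¹ : ℝ) : ℂ) ≠ 0 := by simpa using hr.ne'
  exact (mul_eq_zero.1 h4).resolve_left this

lemma closedBall_zero_add_subset (a b : ℝ) :
    (closedBall 0 a + closedBall 0 b : Set ℝ) ⊆ closedBall 0 (a + b) := by
  rintro _ ⟨x, hx, y, hy, rfl⟩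
  rw [mem_closedBall_zero_iff] at *
  exact (norm_add_le _ _).trans (add_le_add hx hy)

lemma norm_fourierInv_sub_le {m : ℝ → ℂ} {A K : ℝ} (hA : 0 ≤ A) (hm : Continuous m)
    (hs : ∀ ξ, A < |ξ| → m ξ = 0) (hK : ∀ ξ, ‖m ξ‖ ≤ K) (x : ℝ) :
    ‖𝓕⁻ m x - 𝓕⁻ m 0‖ ≤ K * (2 * Real.pi * A) * (2 * A) * |x| := by
  have hK0 : 0 ≤ K := (norm_nonneg _).trans (hK 0)
  have hmi : Integrable m := hm.integrable_of_hasCompactSupport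
    (HasCompactSupport.intro (isCompact_Icc (a := -A) (b := A)) fun ξ hξ => hs ξ (by
      rw [Set.mem_Icc, ← abs_le] at hξ; linarith))
  have hi : ∀ x : ℝ, Integrable fun ξ : ℝ => Real.fourierChar ⟪ξ, x⟫ • m ξ := fun x => by
    have := (VectorFourier.fourierIntegral_convergent_iff Real.continuous_fourierChar
      (L := innerₗ ℝ) continuous_inner (-x)).2 hmi
    simpa using this
  rw [Real.fourierInv_eq, Real.fourierInv_eq, ← integral_sub (hi x) (hi 0),
    ← setIntegral_eq_integral_of_forall_compl_eq_zero (s := Set.Icc (-A) A)]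
  · refine (norm_setIntegral_le_of_norm_le_const (C := K * (2 * Real.pi * A) * |x|) (by simp)
      fun ξ hξ => ?_).trans (le_of_eq ?_)
    · rw [Circle.smul_def, Circle.smul_def, ← sub_smul, norm_smul, mul_comm, mul_assoc]
      refine mul_le_mul (hK ξ) ?_ (norm_nonneg _) hK0
      rw [inner_zero_right, AddChar.map_zero_eq_one, Real.fourierChar_apply, Circle.coe_one,
        mul_comm (Complex.ofReal _)]
      refine (Real.norm_exp_I_mul_ofReal_sub_one_le).trans ?_
      rw [Real.norm_eq_abs, abs_mul, abs_of_pos (by positivity : 0 < 2 * Real.pi),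
        mul_assoc (2 * Real.pi) A]
      refine mul_le_mul_of_nonneg_left ?_ (by positivity)
      rw [Set.mem_Icc, ← abs_le] at hξ
      calc |⟪ξ, x⟫| ≤ |ξ| * |x| := abs_real_inner_le_norm ξ x
        _ ≤ A * |x| := by gcongr
    · rw [Measure.real, Real.volume_Icc, ENNReal.toReal_ofReal (by linarith)]; ring
  · intro ξ hξ
    rw [Set.mem_Icc, ← abs_le, not_le] at hξ
    simp [hs ξ hξ]

/-- A Bernstein type inequality. -/
lemma exists_lipschitz_bound {a : ℝ} (ha : 0 ≤ a) :
    ∃ C > 0, ∀ F : ℝ → ℂ, MemBernstein (closedBall 0 a) F → ∀ M, (∀ x, ‖F x‖ ≤ M) →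
      ∀ x y, ‖F x - F y‖ ≤ C * M * |x - y| := by
  obtain ⟨η, k, hη, hηs, hηk, hk0, hk1⟩ := exists_schwartz_kernel ℝ one_pos
  have hηs' : ∀ ξ, 1 < |ξ| → η ξ = 0 := fun ξ hξ => by
    by_contra h
    have := mem_closedBall_zero_iff.1 (hηs h)
    rw [Real.norm_eq_abs] at this
    linarith
  obtain ⟨B, hB⟩ := hη.bounded_above_of_compact_support
    (HasCompactSupport.of_support_subset_isCompact (isCompact_closedBall 0 1) hηs)
  have hB0 : 0 ≤ B := (norm_nonneg _).trans (hB 0)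
  have hkL : ∀ x, ‖1 - k x‖ ≤ B * (2 * Real.pi * 1) * (2 * 1) * |x| := fun x => by
    have h := norm_fourierInv_sub_le zero_le_one hη hηs' hB (-x)
    rw [Real.fourierInv_eq_fourier_neg, Real.fourierInv_eq_fourier_neg, hηk, neg_neg, neg_zero, hk0,
      abs_neg, norm_sub_rev] at h
    exact h
  set I := ∫ x, ‖k x‖ with hI
  have hI0 : 0 ≤ I := integral_nonneg fun _ => norm_nonneg _
  refine ⟨I * (2 * Real.pi * (a + 1)) * (2 * (a + 1)) + B * (2 * Real.pi * 1) * (2 * 1) + 1,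
    by positivity, fun F hF M hM x y => ?_⟩
  have hM0 : 0 ≤ M := (norm_nonneg _).trans (hM 0)
  set g : ℝ → ℂ := fun w => F (w + y) * k w with hg
  have hgB : MemBernstein (closedBall 0 (a + 1)) g :=
    ((hF.comp_add_right y).mul_kernel hη hηs hηk hk1).mono (closedBall_zero_add_subset a 1)
  have hgk : ∀ w, ‖g w‖ ≤ M * ‖k w‖ := fun w => by
    rw [hg, norm_mul]; gcongr; exact hM _
  have hgi : Integrable g := Integrable.mono' (k.integrable.norm.const_mul M)
    hgB.1.aestronglyMeasurable (Eventually.of_forall hgk)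
  have hmc : Continuous (𝓕 g) := VectorFourier.fourierIntegral_continuous
    Real.continuous_fourierChar (L := innerₗ ℝ) continuous_inner hgi
  have hms : ∀ ξ, a + 1 < |ξ| → 𝓕 g ξ = 0 := fun ξ hξ =>
    hgB.fourier_eq_zero isClosed_closedBall hgi fun h => by
      rw [mem_closedBall_zero_iff, Real.norm_eq_abs] at h; linarith
  have hmK : ∀ ξ, ‖𝓕 g ξ‖ ≤ M * I := fun ξ => by
    refine (VectorFourier.norm_fourierIntegral_le_integral_norm _ _ _ _ _).trans ?_
    rw [hI, ← integral_const_mul]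
    exact integral_mono hgi.norm (k.integrable.norm.const_mul M) hgk
  have hmi : Integrable (𝓕 g) := hmc.integrable_of_hasCompactSupport
    (HasCompactSupport.intro (isCompact_closedBall 0 (a + 1)) fun ξ hξ => hms ξ (by
      rwa [mem_closedBall_zero_iff, Real.norm_eq_abs, not_le] at hξ))
  have h1 := norm_fourierInv_sub_le (by linarith) hmc hms hmK (x - y)
  rw [hgB.1.fourierInv_fourier_eq hgi hmi] at h1
  have h2 : F x - F y = (g (x - y) - g 0) + F x * (1 - k (x - y)) := by
    simp only [hg, hk0, sub_add_cancel, zero_add]; ring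
  rw [h2]
  refine (norm_add_le _ _).trans ?_
  have h3 : ‖F x * (1 - k (x - y))‖ ≤ M * (B * (2 * Real.pi * 1) * (2 * 1) * |x - y|) := by
    rw [norm_mul]; gcongr
    · exact hM x
    · exact hkL _
  have h4 : 0 ≤ M * |x - y| := by positivity
  nlinarith

lemma sum_div_one_add_sq_le (T : ℝ) (hT : 0 ≤ T) (J : ℕ) :
    ∑ j ∈ Finset.range J, T / 2 ^ j / (1 + T / 2 ^ j) ^ 2 ≤ 2 := by
  have h1 : ∀ j : ℕ, T / 2 ^ j / (1 + T / 2 ^ j) ^ 2 ≤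
      2 * (T / 2 ^ j / (1 + T / 2 ^ j) - T / 2 ^ (j + 1) / (1 + T / 2 ^ (j + 1))) := by
    intro j
    rw [pow_succ (2 : ℝ), ← div_div T]
    have ht : 0 ≤ T / 2 ^ j := by positivity
    generalize T / 2 ^ j = t at ht
    have : t / (1 + t) - t / 2 / (1 + t / 2) = t / ((1 + t) * (2 + t)) := by field_simp; ring
    rw [this, ← mul_div_assoc, div_le_div_iff₀ (by positivity) (by positivity)]
    nlinarith [mul_nonneg ht ht, mul_nonneg (mul_nonneg ht ht) ht]
  refine (Finset.sum_le_sum fun j _ => h1 j).trans ?_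
  rw [← Finset.mul_sum, Finset.sum_range_sub']
  have h2 : T / 2 ^ 0 / (1 + T / 2 ^ 0) ≤ 1 := by
    rw [div_le_one (by positivity)]; linarith [show 0 ≤ T / 2 ^ 0 by positivity]
  have h3 : 0 ≤ T / 2 ^ J / (1 + T / 2 ^ J) := by positivity
  linarith

/-- A sampling inequality for a one-dimensional spectrum persists, with a small error term, for
slightly larger spectra. -/
lemma exists_sampling_bound_of_larger_spectrum {H : Set ℝ} {a K : ℝ} (ha : 0 < a) (hK : 0 ≤ K)
    (hs : ∀ F : ℝ → ℂ, MemBernstein (closedBall 0 a) F → Integrable F → ∀ b ≥ 0,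
      (∀ t ∈ H, ‖F t‖ ≤ b) → ∀ x, ‖F x‖ ≤ K * b) :
    ∃ a' > a, ∀ F : ℝ → ℂ, MemBernstein (closedBall 0 a') F → ∀ M, (∀ x, ‖F x‖ ≤ M) →
      ∀ b ≥ 0, (∀ t ∈ H, ‖F t‖ ≤ b) → ∀ x, ‖F x‖ ≤ K * b + M / 4 := by
  obtain ⟨B, hB0, hB⟩ := exists_lipschitz_bound (a := 2 * a) (by positivity)
  obtain ⟨η, k, hη, hηs, hηk, hk0, hk1⟩ := exists_schwartz_kernel ℝ (half_pos ha)
  obtain ⟨C, hC0, hC⟩ := k.exists_norm_le_div_one_add_pow 2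
  obtain ⟨J, hJ⟩ := exists_nat_gt (8 * K * (B * C))
  have hJ0 : 0 < (J : ℝ) := lt_of_le_of_lt (by positivity) hJ
  set δ : ℕ → ℝ := fun j => 1 / 2 ^ j / 2 with hδ
  have hδ0 : ∀ j, 0 < δ j := fun j => by positivity
  have hδ1 : ∀ j, δ j ≤ 1 / 2 := fun j => by
    have : (1 : ℝ) / 2 ^ j ≤ 1 := div_le_one_of_le₀ (one_le_pow₀ one_le_two) (by positivity)
    simp only [hδ]; linarith
  have hδJ : ∀ j < J, δ J ≤ δ j := fun j hj => by
    simp only [hδ]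
    gcongr
    · norm_num
  refine ⟨a * (1 + δ J / 2), by nlinarith [mul_pos ha (hδ0 J)], fun F hF M hM b hb hFb x₀ => ?_⟩
  have hM0 : 0 ≤ M := (norm_nonneg _).trans (hM 0)
  have hF2 : MemBernstein (closedBall 0 (2 * a)) F :=
    hF.mono (closedBall_subset_closedBall (by nlinarith [hδ1 J]))
  have hterm : ∀ j < J, MemBernstein (closedBall 0 a) fun y =>
      F (x₀ + (1 - δ j) * (y - x₀)) * k (δ j * (y - x₀)) := by
    intro j hj
    have hd0 := hδ0 j
    have hd1 := hδ1 j
    have hpos : 0 < (1 - δ j) / δ j := div_pos (by linarith) hd0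
    have h1 := (((hF.comp_add_right x₀).comp_mul_left hpos).mul_kernel hη hηs hηk hk1).mono
      (closedBall_zero_add_subset _ _)
    have h2 := ((h1.comp_mul_left hd0).comp_add_right (-x₀)).mono
      (closedBall_subset_closedBall (ε₂ := a) ?_)
    · convert h2 using 4 with y
      · field_simp
        ring
      · ring
    · rw [mul_add, ← mul_assoc, mul_div_cancel₀ _ hd0.ne']
      have := hδJ j hj
      have h3 : (1 - δ j) * (1 + δ J / 2) + δ j / 2 ≤ 1 := by nlinarith [hδ0 J]
      nlinarith
  set g : ℝ → ℂ := fun y => ∑ j ∈ Finset.range J,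
    F (x₀ + (1 - δ j) * (y - x₀)) * k (δ j * (y - x₀)) with hg
  have hgB : MemBernstein (closedBall 0 a) g :=
    MemBernstein.sum _ fun j hj => hterm j (Finset.mem_range.1 hj)
  have hgi : Integrable g := by
    refine integrable_finsetSum _ fun j hj => ?_
    have hki : Integrable fun y => k (δ j * (y - x₀)) :=
      (k.integrable.comp_mul_left' (hδ0 j).ne').comp_sub_right x₀
    exact hki.bdd_mul (c := M) (hF.1.comp (by fun_prop)).aestronglyMeasurable
      (Eventually.of_forall fun y => hM _)
  have hgH : ∀ t ∈ H, ‖g t‖ ≤ J * b + 2 * (B * M * C) := by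
    intro t ht
    set T := |t - x₀| / 2 with hT
    have hbound : ∀ j, ‖F (x₀ + (1 - δ j) * (t - x₀)) * k (δ j * (t - x₀))‖ ≤
        b + B * M * C * (T / 2 ^ j / (1 + T / 2 ^ j) ^ 2) := by
      intro j
      have hTj : |δ j * (t - x₀)| = T / 2 ^ j := by
        rw [abs_mul, abs_of_pos (hδ0 j), hT, hδ]; field_simp
      have h1 : ‖F (x₀ + (1 - δ j) * (t - x₀))‖ ≤ b + B * M * (T / 2 ^ j) := by
        have h2 := hB F hF2 M hM (x₀ + (1 - δ j) * (t - x₀)) t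
        have h3 : x₀ + (1 - δ j) * (t - x₀) - t = -(δ j * (t - x₀)) := by ring
        rw [h3, abs_neg, hTj] at h2
        have h4 := norm_le_norm_add_norm_sub' (F (x₀ + (1 - δ j) * (t - x₀))) (F t)
        have := hFb t ht
        linarith
      have h5 := hC (δ j * (t - x₀))
      rw [Real.norm_eq_abs, hTj] at h5
      rw [norm_mul]
      calc _ ≤ (b + B * M * (T / 2 ^ j)) * ‖k (δ j * (t - x₀))‖ := by gcongr
        _ = b * ‖k (δ j * (t - x₀))‖ + B * M * (T / 2 ^ j) * ‖k (δ j * (t - x₀))‖ := by ring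
        _ ≤ b * 1 + B * M * (T / 2 ^ j) * (C / (1 + T / 2 ^ j) ^ 2) := by
          gcongr
          exact hk1 _
        _ = _ := by ring
    refine (norm_sum_le _ _).trans ((Finset.sum_le_sum fun j _ => hbound j).trans ?_)
    rw [Finset.sum_add_distrib, ← Finset.mul_sum, Finset.sum_const, Finset.card_range,
      nsmul_eq_mul]
    have := sum_div_one_add_sq_le T (by positivity) J
    have h0 : 0 ≤ B * M * C := by positivity
    nlinarith
  have hx := hs g hgB hgi _ (by positivity) hgH x₀
  have hgx : ‖g x₀‖ = J * ‖F x₀‖ := by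
    simp [hg, hk0]
  rw [hgx] at hx
  have h6 : K * (2 * (B * M * C)) ≤ J * (M / 4) := by nlinarith
  have h7 : (J : ℝ) * ‖F x₀‖ ≤ J * (K * b + M / 4) := by linarith
  exact le_of_mul_le_mul_left h7 hJ0

lemma exists_interpolating_kernel {a a' : ℝ} (ha : 0 < a) (haa' : a < a') :
    ∃ φ : ℝ → ℂ, MemBernstein (closedBall 0 a') φ ∧ φ 0 = 1 ∧
      (∀ n : ℤ, n ≠ 0 → φ (n / (2 * a)) = 0) ∧ ∃ C > 0, ∀ x, ‖φ x‖ ≤ C / (1 + |x|) ^ 3 := by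
  obtain ⟨η, k, hη, hηs, hηk, hk0, hk1⟩ := exists_schwartz_kernel ℝ (sub_pos.2 haa')
  obtain ⟨C, hC0, hC⟩ := k.exists_norm_le_div_one_add_pow 3
  set S : ℝ → ℂ := fun x => ∫ ξ in Set.Icc (-a) a, ((2 * a : ℝ) : ℂ)⁻¹ * Real.fourierChar ⟪x, ξ⟫
    with hS
  have hvol : (volume.restrict (Set.Icc (-a) a)).real Set.univ = 2 * a := by
    rw [Measure.real, Measure.restrict_apply_univ, Real.volume_Icc,
      ENNReal.toReal_ofReal (by linarith)]; ring
  have hSB : MemBernstein (closedBall 0 a) S := by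
    refine memBernstein_integral (integrable_const _) measurable_id ?_
    refine (ae_restrict_mem measurableSet_Icc).mono fun ξ hξ _ => ?_
    rw [mem_closedBall_zero_iff, Real.norm_eq_abs]
    exact abs_le.2 hξ
  have hnorm : ∀ t : ℝ, ‖(Real.fourierChar t : ℂ)‖ = 1 := fun t => Circle.norm_coe _
  have hS1 : ∀ x, ‖S x‖ ≤ 1 := fun x => by
    refine (norm_integral_le_of_norm_le_const (C := (2 * a)⁻¹)
      (Eventually.of_forall fun ξ => ?_)).trans (le_of_eq ?_)
    · rw [norm_mul, hnorm, mul_one, norm_inv, Complex.norm_real, Real.norm_eq_abs,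
        abs_of_pos (by positivity)]
    · rw [hvol]; field_simp
  have hS0 : S 0 = 1 := by
    have : ((2 * a : ℝ) : ℂ) ≠ 0 := by exact_mod_cast (by positivity : (2 * a : ℝ) ≠ 0)
    simp only [hS, inner_zero_left, AddChar.map_zero_eq_one, Circle.coe_one, mul_one]
    rw [integral_const, hvol, Complex.real_smul, mul_inv_cancel₀ this]
  have hSn : ∀ n : ℤ, n ≠ 0 → S (n / (2 * a)) = 0 := by
    intro n hn
    set w : ℂ := 2 * Real.pi * (n / (2 * a)) * Complex.I with hw
    have hac : (a : ℂ) ≠ 0 := by exact_mod_cast ha.ne'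
    have hw0 : w ≠ 0 := by
      have : (n : ℂ) ≠ 0 := by exact_mod_cast hn
      have : (Real.pi : ℂ) ≠ 0 := by exact_mod_cast Real.pi_ne_zero
      rw [hw]
      refine mul_ne_zero (mul_ne_zero (mul_ne_zero two_ne_zero this) ?_) Complex.I_ne_zero
      exact div_ne_zero ‹_› (mul_ne_zero two_ne_zero hac)
    have h1 : ∀ ξ : ℝ, (Real.fourierChar ⟪(n / (2 * a) : ℝ), ξ⟫ : ℂ) = Complex.exp (w * ξ) := by
      intro ξ
      rw [Real.fourierChar_apply, hw]
      congr 1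
      simp
      ring
    simp only [hS, h1]
    rw [integral_const_mul, integral_Icc_eq_integral_Ioc,
      ← intervalIntegral.integral_of_le (by linarith), integral_exp_mul_complex hw0]
    have h2 : Complex.exp (w * a) = Complex.exp (w * ((-a : ℝ) : ℂ)) := by
      rw [Complex.exp_eq_exp_iff_exists_int]
      refine ⟨n, ?_⟩
      rw [hw]
      push_cast
      field_simp
      ring
    rw [h2, sub_self, zero_div, mul_zero]
  refine ⟨fun x => S x * k x, (hSB.mul_kernel hη hηs hηk hk1).mono
    ((closedBall_zero_add_subset _ _).trans (by rw [add_sub_cancel])),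
    by beta_reduce; rw [hS0, hk0, one_mul],
    fun n hn => by beta_reduce; rw [hSn n hn, zero_mul], C, hC0, fun x => ?_⟩
  rw [norm_mul]
  exact (mul_le_of_le_one_left (norm_nonneg _) (hS1 x)).trans (hC x)

lemma summable_inv_one_add_div_sq {B : ℝ} (hB : 0 < B) :
    Summable fun j : ℕ => ((1 + j / B) ^ 2)⁻¹ := by
  have h := ((Real.summable_one_div_nat_add_rpow B 2).2 one_lt_two).mul_left (B ^ 2)
  refine h.congr fun j => ?_
  have : (0 : ℝ) < j + B := by positivity
  rw [abs_of_pos this, Real.rpow_two]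
  field_simp
  ring

lemma exists_natCard_lt_of_lowerUniformDensity_lt {H : Set ℝ} (hH : UniformlyDiscrete H) {q : ℝ}
    (hq : lowerUniformDensity H < q) (R : ℝ) :
    ∃ r ≥ R, ∃ c, (Nat.card ↥(H ∩ closedBall c r) : ℝ) < q * (2 * r) := by
  obtain ⟨δ, hδ, hsep⟩ := hH
  have hnn : ∀ r x : ℝ, 0 ≤
      (Nat.card ↥(H ∩ closedBall x r) : ℝ) / (volume (closedBall x r)).toReal :=
    fun r x => by positivity
  have hbdd : IsBoundedUnder (· ≤ ·) atTop fun r : ℝ => ⨅ x : ℝ,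
      (Nat.card ↥(H ∩ closedBall x r) : ℝ) / (volume (closedBall x r)).toReal := by
    refine ⟨1 / δ + 1, eventually_map.2 ((eventually_ge_atTop 1).mono fun r hr => ?_)⟩
    refine (ciInf_le ⟨0, Set.forall_mem_range.2 (hnn r)⟩ 0).trans ?_
    have h1 := (finite_and_ncard_le_of_separated hδ (S := H ∩ closedBall 0 r) (a := -r) (b := r)
      (fun x hx y hy => hsep x hx.1 y hy.1) (fun x hx => by
        have := mem_closedBall_zero_iff.1 hx.2
        rwa [Real.norm_eq_abs, abs_le] at this)).2
    rw [Real.volume_closedBall, ENNReal.toReal_ofReal (by positivity), div_le_iff₀ (by positivity)]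
    have h2 : (Nat.card ↥(H ∩ closedBall 0 r) : ℝ) ≤ ⌊(r - -r) / δ⌋₊ + 1 := by
      exact_mod_cast h1
    have h3 := Nat.floor_le (show 0 ≤ (r - -r) / δ from div_nonneg (by linarith) hδ.le)
    calc _ ≤ (r - -r) / δ + 1 := h2.trans (by linarith)
      _ ≤ (1 / δ + 1) * (2 * r) := by
        have : (r - -r) / δ = 1 / δ * (2 * r) := by field_simp; ring
        rw [this]; nlinarith
  have h := frequently_lt_of_liminf_lt hbdd.isCoboundedUnder_ge hq
  obtain ⟨r, hrq, hr⟩ := (h.and_eventually (eventually_ge_atTop (max R 1))).exists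
  obtain ⟨c, hc⟩ := exists_lt_of_ciInf_lt hrq
  have hr0 : 0 < r := one_pos.trans_le ((le_max_right _ _).trans hr)
  refine ⟨r, (le_max_left _ _).trans hr, c, ?_⟩
  rwa [Real.volume_closedBall, ENNReal.toReal_ofReal (by positivity), div_lt_iff₀ (by positivity)]
    at hc

/-- If the density of `H` does not exceed the bandwidth then there are functions with slightly
larger spectrum that are relatively small on `H`. -/
lemma exists_small_on_of_lowerUniformDensity_le {H : Set ℝ} (hH : UniformlyDiscrete H) {a a' κ : ℝ}
    (ha : 0 < a) (haa' : a < a') (hκ : 0 < κ) (hD : lowerUniformDensity H ≤ 2 * a) :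
    ∃ F : ℝ → ℂ, MemBernstein (closedBall 0 a') F ∧ ∃ M, (∀ x, ‖F x‖ ≤ M) ∧
      (∃ x, M / 2 < ‖F x‖) ∧ ∀ t ∈ H, ‖F t‖ ≤ κ * M := by
  obtain ⟨a₁, haa₁, ha₁⟩ := exists_between haa'
  obtain ⟨a₂, ha₁₂, ha₂⟩ := exists_between ha₁
  have ha₂0 : 0 < a₂ := by linarith
  set B := 2 * a₂ with hB
  have hB0 : 0 < B := by positivity
  obtain ⟨φ, hφ, hφ0, hφn, C, hC0, hC⟩ := exists_interpolating_kernel ha₂0 ha₂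
  have hsum := summable_inv_one_add_div_sq hB0
  set Q := ∑' j : ℕ, ((1 + j / B) ^ 2)⁻¹ with hQ
  have hQ0 : 0 ≤ Q := tsum_nonneg fun j => by positivity
  set T := C * Q / κ with hT
  have hT0 : 0 ≤ T := by positivity
  obtain ⟨r, hr, c, hc⟩ := exists_natCard_lt_of_lowerUniformDensity_lt hH (q := 2 * a₁)
    (by linarith) (max (T + 1) (a₂ * T / (a₂ - a₁)))
  have hrT : T + 1 ≤ r := (le_max_left _ _).trans hr
  have hr2 : a₂ * T ≤ r * (a₂ - a₁) := by
    rw [← div_le_iff₀ (by linarith)]; exact (le_max_right _ _).trans hr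
  set ρ := r - T with hρ
  set n := ⌊B * (2 * ρ)⌋₊ + 1 with hn
  have hfloor : (⌊B * (2 * ρ)⌋₊ : ℝ) ≤ B * (2 * ρ) := Nat.floor_le (by
    apply mul_nonneg hB0.le; linarith)
  have hfin : (H ∩ closedBall c r).Finite := by
    obtain ⟨δ, hδ, hsep⟩ := hH
    exact (finite_and_ncard_le_of_separated hδ (a := c - r) (b := c + r)
      (fun x hx y hy => hsep x hx.1 y hy.1) (fun x hx => by
        rw [← Real.closedBall_eq_Icc]; exact hx.2)).1
  have : Fintype ↥(H ∩ closedBall c r) := hfin.fintype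
  have hcard : Fintype.card ↥(H ∩ closedBall c r) < n := by
    rw [← Nat.card_eq_fintype_card]
    have h1 : B * (2 * ρ) < n := by rw [hn]; push_cast; exact Nat.lt_floor_add_one _
    have h2 : (Nat.card ↥(H ∩ closedBall c r) : ℝ) < n := by
      refine hc.trans_le (le_trans ?_ h1.le)
      rw [hB, hρ]; nlinarith
    exact_mod_cast h2
  set y : Fin n → ℝ := fun j => c - ρ + j / B with hy
  obtain ⟨α, hα, hα0⟩ : ∃ α : Fin n → ℂ, (∀ t ∈ H ∩ closedBall c r, ∑ j, φ (t - y j) * α j = 0) ∧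
      α ≠ 0 := by
    let A : Matrix ↥(H ∩ closedBall c r) (Fin n) ℂ := Matrix.of fun t j => φ (t - y j)
    have hker := LinearMap.ker_ne_bot_of_finrank_lt (f := A.mulVecLin) (by simpa using hcard)
    obtain ⟨α, hα, hα0⟩ := (Submodule.ne_bot_iff _).1 hker
    exact ⟨α, fun t ht => congrFun (LinearMap.mem_ker.1 hα) ⟨t, ht⟩, hα0⟩
  have hA0 : 0 < ‖α‖ := norm_pos_iff.2 hα0
  set F : ℝ → ℂ := fun x => ∑ j, α j * φ (x + -y j) with hF
  have hFB : MemBernstein (closedBall 0 a') F :=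
    MemBernstein.sum _ fun j _ => (hφ.comp_add_right _).const_mul _
  have hFy : ∀ i, F (y i) = α i := by
    intro i
    simp only [hF]
    rw [Finset.sum_eq_single i]
    · simp [hφ0]
    · intro j _ hji
      have h1 : y i + -y j = ((i - j : ℤ) : ℝ) / (2 * a₂) := by
        simp only [hy]; push_cast; ring
      rw [h1, hφn, mul_zero]
      rw [sub_ne_zero]
      exact fun h => hji (Fin.ext (by exact_mod_cast h.symm))
    · simp
  obtain ⟨b, hb⟩ := hFB.2.1
  have hbdd : BddAbove (Set.range fun x => ‖F x‖) := ⟨b, Set.forall_mem_range.2 hb⟩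
  set M := ⨆ x, ‖F x‖ with hM
  have hFM : ∀ x, ‖F x‖ ≤ M := fun x => le_ciSup hbdd x
  have hM0 : 0 ≤ M := (norm_nonneg _).trans (hFM 0)
  have hαM : ‖α‖ ≤ M := (pi_norm_le_iff_of_nonneg hM0).2 fun i => by rw [← hFy i]; exact hFM _
  refine ⟨F, hFB, M, hFM, exists_lt_of_lt_ciSup (half_lt_self (hA0.trans_le hαM)), ?_⟩
  intro t ht
  by_cases htc : t ∈ closedBall c r
  · have h0 : F t = 0 := by
      rw [← hα t ⟨ht, htc⟩]
      exact Finset.sum_congr rfl fun j _ => by rw [mul_comm, sub_eq_add_neg]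
    rw [h0, norm_zero]; positivity
  obtain ⟨σ, hσ⟩ : ∃ σ : Equiv.Perm (Fin n), ∀ j, T + (σ j : ℕ) / B ≤ |t + -y j| := by
    rw [mem_closedBall, Real.dist_eq, not_le, lt_abs] at htc
    rcases htc with h | h
    · refine ⟨Fin.revPerm, fun j => le_trans ?_ (le_abs_self _)⟩
      have h1 : ((Fin.rev j : ℕ) : ℝ) = ⌊B * (2 * ρ)⌋₊ - j := by
        rw [eq_sub_iff_add_eq]
        have := Fin.val_rev j
        have := j.isLt
        norm_cast
        omega
      have h2 : (⌊B * (2 * ρ)⌋₊ : ℝ) / B ≤ 2 * ρ := by rw [div_le_iff₀ hB0]; linarith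
      rw [Fin.revPerm_apply, h1, sub_div]
      simp only [hy]
      linarith
    · refine ⟨Equiv.refl _, fun j => le_trans ?_ (neg_le_abs _)⟩
      simp only [hy, Equiv.refl_apply]
      linarith
  have hterm : ∀ j, ‖α j * φ (t + -y j)‖ ≤ M * (C / (1 + T) * ((1 + (σ j : ℕ) / B) ^ 2)⁻¹) := by
    intro j
    rw [norm_mul]
    refine mul_le_mul ((norm_le_pi_norm α j).trans hαM) ((hC _).trans ?_) (norm_nonneg _) hM0
    rw [div_mul_eq_mul_div, ← div_eq_mul_inv, div_div]
    have h0 : (0 : ℝ) ≤ (σ j : ℕ) / B := by positivity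
    gcongr
    calc (1 + ((σ j : ℕ) : ℝ) / B) ^ 2 * (1 + T)
        ≤ (1 + |t + -y j|) ^ 2 * (1 + |t + -y j|) := by
          have := hσ j
          gcongr <;> linarith
      _ = _ := by ring
  calc ‖F t‖ ≤ ∑ j, M * (C / (1 + T) * ((1 + (σ j : ℕ) / B) ^ 2)⁻¹) :=
        (norm_sum_le _ _).trans (Finset.sum_le_sum fun j _ => hterm j)
    _ = M * (C / (1 + T) * ∑ j : Fin n, ((1 + (j : ℕ) / B) ^ 2)⁻¹) := by
        rw [← Finset.mul_sum, ← Finset.mul_sum]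
        congr 2
        exact Equiv.sum_comp σ fun j : Fin n => ((1 + ((j : ℕ) : ℝ) / B) ^ 2)⁻¹
    _ ≤ M * (C / (1 + T) * Q) := by
        gcongr
        rw [Fin.sum_univ_eq_sum_range fun j : ℕ => ((1 + (j : ℝ) / B) ^ 2)⁻¹]
        exact hsum.sum_le_tsum _ fun j _ => by positivity
    _ ≤ M * κ := by
        gcongr
        rw [div_mul_eq_mul_div, div_le_iff₀ (by positivity)]
        have : κ * T = C * Q := by rw [hT]; field_simp
        nlinarith
    _ = κ * M := mul_comm _ _

lemma exists_segment_of_smul_mem_sub {Ω : Set V} (hΩc : Convex ℝ Ω) (hΩpos : 0 < volume Ω)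
    {v : V} (hv : ‖v‖ = 1) {D : ℝ} (hD0 : 0 ≤ D) (hD : D • v ∈ Ω - Ω) :
    ∃ a > 0, D ≤ 2 * a ∧ ∃ c, ∀ ξ : ℝ, |ξ| ≤ a → c + ξ • v ∈ Ω := by
  rcases hD0.eq_or_lt with rfl | hD0
  · have hint : (interior Ω).Nonempty := by
      by_contra h
      rw [Set.not_nonempty_iff_eq_empty] at h
      refine hΩpos.ne' (measure_mono_null ?_ (hΩc.addHaar_frontier volume))
      rw [frontier, h, Set.sdiff_empty]
      exact subset_closure
    obtain ⟨c, hc⟩ := hint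
    obtain ⟨r, hr, hrΩ⟩ := Metric.mem_nhds_iff.1 (mem_interior_iff_mem_nhds.1 hc)
    refine ⟨r / 2, by positivity, by positivity, c, fun ξ hξ => hrΩ ?_⟩
    rw [mem_ball_iff_norm, add_sub_cancel_left, norm_smul, hv, mul_one, Real.norm_eq_abs]
    linarith
  · obtain ⟨p, hp, q, hq, hpq⟩ := Set.mem_sub.1 hD
    refine ⟨D / 2, by positivity, by linarith, (2⁻¹ : ℝ) • (p + q), fun ξ hξ => ?_⟩
    obtain ⟨h1, h2⟩ := abs_le.1 hξ
    have h3 : -(1 / 2) ≤ ξ / D := by rw [le_div_iff₀ hD0]; linarith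
    have h4 : ξ / D ≤ 1 / 2 := by rw [div_le_iff₀ hD0]; linarith
    have key := hΩc hp hq (a := 1 / 2 + ξ / D) (b := 1 / 2 - ξ / D) (by linarith) (by linarith)
      (by ring)
    convert key using 1
    have : ξ • v = (ξ / D) • (p - q) := by rw [hpq, smul_smul, div_mul_cancel₀ _ hD0.ne']
    rw [this]
    module

/-- If parallel hyperplanes at heights `H` are sampling for a spectrum containing a segment in the
normal direction, then `H` is sampling for the segment. -/
lemma norm_le_of_isSamplingSet_of_segment {Ω : Set V} {v : V} (hv : ‖v‖ = 1) {H : Set ℝ} {K : ℝ}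
    (hK0 : 0 < K)
    (hK : ∀ f : V → ℂ, MemBernstein Ω f → ∀ x, ‖f x‖ ≤
      K * sSup ((fun p => ‖f p‖) '' {x | ∃ a ∈ H, ∃ y : V, ⟪y, v⟫ = 0 ∧ x = y + a • v}))
    {a : ℝ} {c : V} (hc : ∀ ξ : ℝ, |ξ| ≤ a → c + ξ • v ∈ Ω)
    {F : ℝ → ℂ} (hF : MemBernstein (closedBall 0 a) F) (hFi : Integrable F) {b : ℝ} (hb : 0 ≤ b)
    (hFb : ∀ t ∈ H, ‖F t‖ ≤ b) (x : ℝ) : ‖F x‖ ≤ K * b := by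
  have hm : Continuous (𝓕 F) := VectorFourier.fourierIntegral_continuous
    Real.continuous_fourierChar (L := innerₗ ℝ) continuous_inner hFi
  have hm0 : ∀ ξ ∉ closedBall (0 : ℝ) a, 𝓕 F ξ = 0 := fun ξ hξ =>
    hF.fourier_eq_zero isClosed_closedBall hFi hξ
  have hmi : Integrable (𝓕 F) := hm.integrable_of_hasCompactSupport
    (HasCompactSupport.intro (isCompact_closedBall 0 a) hm0)
  have hinv := hF.1.fourierInv_fourier_eq hFi hmi
  have hvv : ⟪v, v⟫ = 1 := by rw [real_inner_self_eq_norm_sq, hv, one_pow]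
  set f : V → ℂ := fun x => ∫ ξ, 𝓕 F ξ * Real.fourierChar ⟪x, c + ξ • v⟫ with hf
  have hfB : MemBernstein Ω f := by
    refine memBernstein_integral hmi (by fun_prop) (Eventually.of_forall fun ξ hξ => hc ξ ?_)
    have : ξ ∈ closedBall (0 : ℝ) a := by
      by_contra h
      exact hξ (hm0 ξ h)
    rwa [mem_closedBall_zero_iff, Real.norm_eq_abs] at this
  have hfF : ∀ x, ‖f x‖ = ‖F ⟪x, v⟫‖ := by
    intro x
    have : f x = Real.fourierChar ⟪x, c⟫ * F ⟪x, v⟫ := by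
      rw [← congrFun hinv ⟪x, v⟫, Real.fourierInv_eq, ← integral_const_mul]
      simp only [hf]
      congr 1
      ext ξ
      rw [inner_add_right, AddChar.map_add_eq_mul, Circle.coe_mul, Circle.smul_def, smul_eq_mul,
        inner_smul_right, mul_left_comm, mul_comm (𝓕 F ξ)]
      congr 4
      simp [mul_comm]
    rw [this, norm_mul, Circle.norm_coe, one_mul]
  have hP := hK f hfB (x • v)
  rw [hfF, inner_smul_left, hvv] at hP
  simp only [conj_trivial, mul_one] at hP
  refine hP.trans (mul_le_mul_of_nonneg_left (Real.sSup_le ?_ hb) hK0.le)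
  rintro _ ⟨_, ⟨t, ht, y, hy, rfl⟩, rfl⟩
  dsimp only
  rw [hfF, inner_add_left, hy, inner_smul_left, hvv]
  simpa using hFb t ht

/-- If the density of the heights is at most the width of the spectrum in the normal direction,
then parallel hyperplanes do not form a sampling set. -/
theorem lowerUniformDensity_smul_notMem_of_isSamplingSet {Ω : Set V} (hΩc : Convex ℝ Ω)
    (hΩpos : 0 < volume Ω) {v : V} (hv : ‖v‖ = 1) {H : Set ℝ} (hH : UniformlyDiscrete H)
    (hs : IsSamplingSet Ω {x | ∃ a ∈ H, ∃ y : V, ⟪y, v⟫ = 0 ∧ x = y + a • v}) :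
    lowerUniformDensity H • v ∉ Ω - Ω := by
  intro hD
  obtain ⟨K, hK0, hK⟩ := hs
  obtain ⟨a, ha, hDa, c, hc⟩ :=
    exists_segment_of_smul_mem_sub hΩc hΩpos hv (lowerUniformDensity_nonneg H) hD
  obtain ⟨a', haa', h⟩ := exists_sampling_bound_of_larger_spectrum ha hK0.le
    fun F hF hFi b hb hFb x => norm_le_of_isSamplingSet_of_segment hv hK0 hK hc hF hFi hb hFb x
  obtain ⟨F, hF, M, hM, ⟨x, hx⟩, hFH⟩ := exists_small_on_of_lowerUniformDensity_le hH ha haa'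
    (κ := 1 / (4 * K)) (by positivity) hDa
  have hM0 : 0 ≤ M := (norm_nonneg _).trans (hM 0)
  have hfin := h F hF M hM _ (by positivity) hFH x
  have : K * (1 / (4 * K) * M) = M / 4 := by field_simp
  linarith

/-- Theorem 2 (parallel lines): `P = ⋃_{a ∈ H} (l + a·v_l)` is a sampling set for `B_Ω`
iff `D⁻(H)·v_l ∉ Ω − Ω`. -/
theorem parallel_lines_sampling
    (Ω : Set (EuclideanSpace ℝ (Fin 2))) (hΩcompact : IsCompact Ω) (hΩconvex : Convex ℝ Ω)
    (hΩpos : 0 < volume Ω)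
    (v : EuclideanSpace ℝ (Fin 2)) (hv : ‖v‖ = 1)
    (H : Set ℝ) (hH : UniformlyDiscrete H)
    (P : Set (EuclideanSpace ℝ (Fin 2)))
    (hP : P = {x | ∃ a ∈ H, ∃ y : EuclideanSpace ℝ (Fin 2), ⟪y, v⟫ = 0 ∧ x = y + a • v}) :
    IsSamplingSet Ω P ↔ lowerUniformDensity H • v ∉ Ω - Ω := by
  subst hP
  exact ⟨lowerUniformDensity_smul_notMem_of_isSamplingSet hΩconvex hΩpos hv hH,
    isSamplingSet_of_lowerUniformDensity hΩcompact hΩconvex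
      (nonempty_of_measure_ne_zero hΩpos.ne') hv hH⟩
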